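/- arXiv:1502.01149 — 2 statements merged into one kernel-verified Lean document; each statement's English description precedes it below -/
import Mathlib

section
/- Let n ≥ 4 and let φ : ℝⁿ → ℝⁿ be a continuous, non-degenerate coherency preserver for the form q(x₁,…,xₙ) = xₙ² − (x₁² + ⋯ + x_{n−1}²). Assume φ(0) = 0, the induced map φ_0 : 𝒬 → 𝒬 is nonconstant, and 0 is generic (the preimage φ⁻¹({0}) has empty interior). Then φ preserves adjacency: for all a, b ∈ ℝⁿ with q(a−b) = 0 and a ≠ b, one has q(φ(a)−φ(b)) = 0 and φ(a) ≠ φ(b). -/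
/-!
The preserver turns out to be linear up to a nonzero factor, with injective linear part; this
gives injectivity, hence preservation of adjacency.

Let `B` be the bilinear form of `q`, let `ψ` be the map on `𝒬` induced at `0`, and conjugate `φ`
by the inversion `iv x = 2x / q(x)`: put `z w = iv (φ (iv w))`, defined on the open set `Om` where
`q(w)` and `q(φ (iv w))` are nonzero. The null cone of `x = iv w` meets the null line `ℝ p` in the
point `p / B(w, p)`. Since `φ` sends `ℝ p` into `ℝ ψ(p)`, the number `B(z w, ψ p)` depends only on
`B(w, p)` (`Pres.rel_eq`). Moreover `z` sends null steps to null steps (`Pres.null`).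

Near a point `w0` of `Om` these relations force `z` to be affine (`Pres.affine`). Either `n`
elements of `𝒬` can be found that are linearly independent together with their images under `ψ`,
or some direction `u` leaves `B(z ·, ψ p)` unchanged for generic `p`; in the latter case two
such `p` with distinct `ψ p` make `z` locally constant (`Pres.locconst_of_two`). In the former
case one more element `p` in general position turns the relations into a Cauchy functional
equation, so that `z w = A w + b` with `A` zero or bijective.

The affine description propagates along rays `t w0`, `t > 0` (`Pres.ray`). Letting `t → ∞` and
using `φ 0 = 0` excludes `A = 0`. Writing `b = A c`, the relations determine `φ` on half lines
`ℝ p`, and this determines `φ x` up to its norm for many `x` (`Pres.value`). There is a spacelike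
point in `Om`; near it the sign of `B(w, p)` can be changed, which yields `c = 0` and then, for a
dense set of `x`, that `φ x = 0` or `l φ(x) = A x`, where `q ∘ A = l q`. Connectedness of the
complement of `0` and non-degeneracy leave only `l φ = A` (`Pres.eq_linear`).
-/

/-- The standard Minkowski quadratic form
`q(x₁,…,xₙ) = xₙ² − (x₁² + ⋯ + x_{n−1}²)` on `ℝⁿ`. -/
noncomputable def mq (n : ℕ) (x : Fin n → ℝ) : ℝ :=
  ∑ i : Fin n, (if (i : ℕ) = n - 1 then (1 : ℝ) else -1) * x i ^ 2

/-- The set `𝒬 = {(x₁,…,x_{n−1},1) : x₁² + ⋯ + x_{n−1}² = 1}` in `ℝⁿ`. -/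
def QSet (n : ℕ) : Set (Fin n → ℝ) :=
  {p | (∀ i : Fin n, (i : ℕ) = n - 1 → p i = 1) ∧
       (∑ i : Fin n, if (i : ℕ) = n - 1 then 0 else p i ^ 2) = 1}

/-- `ψ` restricted to `𝒬` is the map `φ_a` induced by `φ` at the point `a`:
it sends `𝒬` into `𝒬` and `φ` maps the coherent line `a + ℝ·p` into the
coherent line `φ(a) + ℝ·ψ(p)`. -/
def IsInducedMap (n : ℕ) (φ : (Fin n → ℝ) → (Fin n → ℝ)) (a : Fin n → ℝ)
    (ψ : (Fin n → ℝ) → (Fin n → ℝ)) : Prop :=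
  ∀ p ∈ QSet n, ψ p ∈ QSet n ∧ ∀ t : ℝ, ∃ s : ℝ, φ (a + t • p) = φ a + s • ψ p


open Filter Topology Set

namespace Mink

/-! ### The Minkowski form -/

/-- The bilinear form polarizing `mq`. -/
noncomputable def B (n : ℕ) : (Fin n → ℝ) →ₗ[ℝ] (Fin n → ℝ) →ₗ[ℝ] ℝ :=
  LinearMap.mk₂ ℝ
    (fun x y => ∑ i : Fin n, (if (i : ℕ) = n - 1 then (1 : ℝ) else -1) * (x i * y i))
    (fun x x' y => by
      rw [← Finset.sum_add_distrib]
      exact Finset.sum_congr rfl fun i _ => by rw [Pi.add_apply]; ring)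
    (fun c x y => by
      rw [smul_eq_mul, Finset.mul_sum]
      exact Finset.sum_congr rfl fun i _ => by rw [Pi.smul_apply, smul_eq_mul]; ring)
    (fun x y y' => by
      rw [← Finset.sum_add_distrib]
      exact Finset.sum_congr rfl fun i _ => by rw [Pi.add_apply]; ring)
    (fun c x y => by
      rw [smul_eq_mul, Finset.mul_sum]
      exact Finset.sum_congr rfl fun i _ => by rw [Pi.smul_apply, smul_eq_mul]; ring)

/-- The spatial (positive semidefinite) part of the Minkowski form. -/
noncomputable def E (n : ℕ) (x y : Fin n → ℝ) : ℝ :=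
  ∑ i : Fin n, if (i : ℕ) = n - 1 then 0 else x i * y i

variable {n : ℕ}

lemma B_apply (x y : Fin n → ℝ) :
    B n x y = ∑ i : Fin n, (if (i : ℕ) = n - 1 then (1 : ℝ) else -1) * (x i * y i) := rfl

lemma mq_eq (x : Fin n → ℝ) : mq n x = B n x x := by
  rw [mq, B_apply]; exact Finset.sum_congr rfl fun i _ => by ring

lemma B_comm (x y : Fin n → ℝ) : B n x y = B n y x := by
  rw [B_apply, B_apply]; exact Finset.sum_congr rfl fun i _ => by ring

lemma continuous_B {X : Type*} [TopologicalSpace X] {f g : X → Fin n → ℝ}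
    (hf : Continuous f) (hg : Continuous g) : Continuous fun a => B n (f a) (g a) := by
  simp only [B_apply]; fun_prop

/-- The time coordinate. -/
def lst (hn : 4 ≤ n) : Fin n := ⟨n - 1, by omega⟩

lemma eq_lst_iff (hn : 4 ≤ n) (i : Fin n) : (i : ℕ) = n - 1 ↔ i = lst hn := by
  simp [lst, Fin.ext_iff]

lemma B_eq (hn : 4 ≤ n) (x y : Fin n → ℝ) :
    B n x y = x (lst hn) * y (lst hn) - E n x y := by
  have : x (lst hn) * y (lst hn) = ∑ i : Fin n, if (i : ℕ) = n - 1 then x i * y i else 0 := by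
    simp [eq_lst_iff hn]
  rw [this, E, B_apply, ← Finset.sum_sub_distrib]
  exact Finset.sum_congr rfl fun i _ => by split_ifs <;> ring

lemma E_nonneg (x : Fin n → ℝ) : 0 ≤ E n x x :=
  Finset.sum_nonneg fun i _ => by split_ifs; exacts [le_rfl, mul_self_nonneg _]

lemma E_cs (x y : Fin n → ℝ) : E n x y ^ 2 ≤ E n x x * E n y y := by
  have := Finset.sum_mul_sq_le_sq_mul_sq Finset.univ
    (fun i : Fin n => if (i : ℕ) = n - 1 then 0 else x i)
    (fun i : Fin n => if (i : ℕ) = n - 1 then 0 else y i)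
  have aux : ∀ a b : Fin n → ℝ, E n a b = ∑ i : Fin n,
      (if (i : ℕ) = n - 1 then 0 else a i) * (if (i : ℕ) = n - 1 then 0 else b i) := fun a b =>
    Finset.sum_congr rfl fun i _ => by split_ifs <;> ring
  simp only [aux]
  simpa only [pow_two] using this

lemma eq_zero_of_E (hn : 4 ≤ n) {x : Fin n → ℝ} (h : E n x x = 0) (ht : x (lst hn) = 0) :
    x = 0 := by
  rw [E, Finset.sum_eq_zero_iff_of_nonneg
    (fun i _ => by split_ifs; exacts [le_rfl, mul_self_nonneg _])] at h
  ext i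
  have := h i (Finset.mem_univ _)
  split_ifs at this with hi
  · rw [(eq_lst_iff hn i).1 hi]; exact ht
  · simpa using this

lemma mem_Q (hn : 4 ≤ n) {p : Fin n → ℝ} : p ∈ QSet n ↔ p (lst hn) = 1 ∧ B n p p = 0 := by
  rw [QSet, mem_ofPred_eq, B_eq hn]
  have : E n p p = ∑ i : Fin n, if (i : ℕ) = n - 1 then 0 else p i ^ 2 := by
    rw [E]; exact Finset.sum_congr rfl fun i _ => by split_ifs <;> ring
  rw [← this]
  constructor
  · rintro ⟨h1, h2⟩
    have := h1 (lst hn) rfl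
    exact ⟨this, by rw [this, h2]; ring⟩
  · rintro ⟨h1, h2⟩
    refine ⟨fun i hi => by rw [(eq_lst_iff hn i).1 hi, h1], ?_⟩
    rw [h1] at h2; linarith

lemma ne_zero_of_Q (hn : 4 ≤ n) {p : Fin n → ℝ} (hp : p ∈ QSet n) : p ≠ 0 := by
  rintro rfl
  simpa using ((mem_Q hn).1 hp).1

/-- The unit vector in the time direction. -/
noncomputable def e0 (hn : 4 ≤ n) : Fin n → ℝ := Pi.single (lst hn) 1

lemma B_e0 (hn : 4 ≤ n) (x : Fin n → ℝ) : B n x (e0 hn) = x (lst hn) := by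
  rw [B_apply, Finset.sum_eq_single (lst hn)]
  · simp [e0, lst]
  · intro i _ hi; simp [e0, hi]
  · simp

lemma e0_lst (hn : 4 ≤ n) : e0 hn (lst hn) = 1 := by simp [e0]

/-- A nonzero null vector is a multiple of an element of `𝒬`. -/
lemma null_eq_smul (hn : 4 ≤ n) {v : Fin n → ℝ} (hv : B n v v = 0) (h0 : v ≠ 0) :
    v (lst hn) ≠ 0 ∧ (v (lst hn))⁻¹ • v ∈ QSet n := by
  have h1 : v (lst hn) ≠ 0 := by
    intro h
    rw [B_eq hn, h] at hv
    exact h0 (eq_zero_of_E hn (by linarith) h)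
  exact ⟨h1, (mem_Q hn).2 ⟨by simp [h1], by simp [hv]⟩⟩

/-- Totally isotropic subspaces have dimension at most one. -/
lemma null_perp (hn : 4 ≤ n) {u p : Fin n → ℝ} (hp : p ∈ QSet n) (hu : B n u u = 0)
    (h : B n u p = 0) : u = u (lst hn) • p := by
  obtain ⟨h1, h2⟩ := (mem_Q hn).1 hp
  have key : B n (u - u (lst hn) • p) (u - u (lst hn) • p) = 0 := by
    simp [hu, h2, h, B_comm p u]
  have ht : (u - u (lst hn) • p) (lst hn) = 0 := by simp [h1]
  rw [B_eq hn, ht] at key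
  exact sub_eq_zero.1 (eq_zero_of_E hn (by linarith) ht)

lemma B_Q_ne (hn : 4 ≤ n) {p p' : Fin n → ℝ} (hp : p ∈ QSet n) (hp' : p' ∈ QSet n)
    (h : p ≠ p') : B n p p' ≠ 0 := by
  intro h0
  have := null_perp hn hp' ((mem_Q hn).1 hp).2 h0
  rw [((mem_Q hn).1 hp).1, one_smul] at this
  exact h this

lemma B_Q_pos (hn : 4 ≤ n) {p p' : Fin n → ℝ} (hp : p ∈ QSet n) (hp' : p' ∈ QSet n)
    (h : p ≠ p') : 0 < B n p p' := by
  refine lt_of_le_of_ne ?_ (B_Q_ne hn hp hp' h).symm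
  obtain ⟨h1, h2⟩ := (mem_Q hn).1 hp
  obtain ⟨h3, h4⟩ := (mem_Q hn).1 hp'
  rw [B_eq hn] at *
  have := E_cs p p'
  rw [h1, h3] at *
  nlinarith

/-- The orthogonal complement of two distinct null lines is anisotropic. -/
lemma null_perp_two (hn : 4 ≤ n) {u p p' : Fin n → ℝ} (hp : p ∈ QSet n) (hp' : p' ∈ QSet n)
    (hne : p ≠ p') (hu : B n u u = 0) (h : B n u p = 0) (h' : B n u p' = 0) : u = 0 := by
  have h1 := null_perp hn hp hu h
  rw [h1] at h'
  simp only [map_smul, LinearMap.smul_apply, smul_eq_mul, mul_eq_zero, B_Q_ne hn hp hp' hne,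
    or_false] at h'
  rw [h1, h', zero_smul]

lemma B_nondeg {u : Fin n → ℝ} (h : ∀ v, B n u v = 0) : u = 0 := by
  ext i
  have := h (Pi.single i 1)
  rw [B_apply, Finset.sum_eq_single i] at this
  · simp only [Pi.single_eq_same, mul_one, mul_eq_zero] at this
    rcases this with h | h
    · split_ifs at h <;> norm_num at h
    · exact h
  · intro j _ hj; simp [hj]
  · simp

lemma B_nondegenerate : LinearMap.BilinForm.Nondegenerate (B n) :=
  ⟨fun _ h => B_nondeg h, fun _ h => B_nondeg fun v => by rw [B_comm]; exact h v⟩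

lemma exists_repr (f : (Fin n → ℝ) →ₗ[ℝ] ℝ) : ∃ u, ∀ v, B n u v = f v :=
  ⟨(LinearMap.BilinForm.toDual (B n) B_nondegenerate).symm f,
    LinearMap.BilinForm.apply_toDual_symm_apply (hB := B_nondegenerate) f⟩

lemma exists_three (hn : 4 ≤ n) : ∃ a b c : Fin n → ℝ, a ∈ QSet n ∧ b ∈ QSet n ∧ c ∈ QSet n ∧
    a ≠ b ∧ a ≠ c ∧ b ≠ c := by
  have key : ∀ (i : Fin n) (t : ℝ), i ≠ lst hn → t ^ 2 = 1 →
      (e0 hn + t • Pi.single i 1 : Fin n → ℝ) ∈ QSet n := by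
    intro i t hi ht
    rw [mem_Q hn]
    have h1 : B n (Pi.single i 1) (Pi.single i 1) = -1 := by
      rw [B_apply, Finset.sum_eq_single i]
      · simp [eq_lst_iff hn, hi]
      · intro j _ hj; simp [hj]
      · simp
    have h2 := B_e0 hn (Pi.single i 1)
    have h3 := B_e0 hn (e0 hn)
    have h4 : B n (e0 hn) (Pi.single i 1) = 0 := by rw [B_comm, h2]; simp [hi.symm]
    refine ⟨by simp [e0, hi.symm], ?_⟩
    simp only [map_add, map_smul, LinearMap.add_apply, LinearMap.smul_apply, h1, h3, h4, h2,
      smul_eq_mul, e0_lst]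
    rw [Pi.single_eq_of_ne hi.symm]; linarith
  have hi0 : (⟨0, by omega⟩ : Fin n) ≠ lst hn := by simp [lst]; omega
  have hi1 : (⟨1, by omega⟩ : Fin n) ≠ lst hn := by simp [lst]; omega
  have h01 : (⟨0, by omega⟩ : Fin n) ≠ ⟨1, by omega⟩ := by simp
  refine ⟨_, _, _, key _ 1 hi0 (by norm_num), key _ (-1) hi0 (by norm_num),
    key _ 1 hi1 (by norm_num), ?_, ?_, ?_⟩
  · intro h
    have := congrFun h ⟨0, by omega⟩
    simp at this; linarith
  · intro h
    have := congrFun h ⟨0, by omega⟩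
    simp [h01] at this
  · intro h
    have := congrFun h ⟨0, by omega⟩
    simp [h01] at this

lemma exists_third (hn : 4 ≤ n) (p p' : Fin n → ℝ) : ∃ r ∈ QSet n, r ≠ p ∧ r ≠ p' := by
  obtain ⟨a, b, c, ha, hb, hc, hab, hac, hbc⟩ := exists_three hn
  by_contra! H
  have h1 := H a ha
  have h2 := H b hb
  have h3 := H c hc
  grind

/-- A quadratic polynomial vanishing near `0` is zero. -/
lemma quad_zero {a b c : ℝ} (h : ∀ᶠ t : ℝ in 𝓝 0, a + b * t + c * t ^ 2 = 0) :
    a = 0 ∧ b = 0 ∧ c = 0 := by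
  obtain ⟨ε, hε, h⟩ := Metric.eventually_nhds_iff.1 h
  have h0 := h (y := 0) (by simpa)
  have h1 := h (y := ε / 2) (by rw [Real.dist_eq, sub_zero, abs_of_pos] <;> linarith)
  have h2 := h (y := -(ε / 2)) (by rw [Real.dist_eq, sub_zero, abs_neg, abs_of_pos] <;> linarith)
  have ha : a = 0 := by simpa using h0
  subst ha
  have hb : b * ε = 0 := by linarith
  have hc : c * ε ^ 2 = 0 := by nlinarith
  have := hε.ne'
  simp_all

/-- `𝒬` is not locally contained in a hyperplane. -/
lemma Q_open (hn : 4 ≤ n) {u p : Fin n → ℝ} (hp : p ∈ QSet n)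
    (h : ∀ᶠ r in 𝓝 p, r ∈ QSet n → B n u r = 0) : u = 0 := by
  obtain ⟨p', hp', hne, -⟩ := exists_third hn p p
  have hpp := B_Q_ne hn hp' hp hne
  have hq := ((mem_Q hn).1 hp).2
  have hq' := ((mem_Q hn).1 hp').2
  have ht := ((mem_Q hn).1 hp).1
  -- Reflecting `p'` in a vector `x` near `p` gives, up to scaling, elements of `𝒬` near `p`.
  have main : ∀ m, B n u p = 0 ∧ B n p' p * B n u m - B n p m * B n u p' = 0 ∧
      2 * B n p' m * B n u m - B n m m * B n u p' = 0 := by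
    intro m
    set x : ℝ → Fin n → ℝ := fun t => p + t • m with hx
    set v : ℝ → Fin n → ℝ := fun t => (2 * B n p' (x t)) • x t - B n (x t) (x t) • p' with hv
    have hxc : Continuous x := by fun_prop
    have hvc : Continuous v := by
      have h1 : Continuous fun t => B n p' (x t) := continuous_B continuous_const hxc
      have h2 : Continuous fun t => B n (x t) (x t) := continuous_B hxc hxc
      fun_prop
    have hvnull : ∀ t, B n (v t) (v t) = 0 := by
      intro t
      simp only [hv, map_sub, map_smul, LinearMap.sub_apply, LinearMap.smul_apply, smul_eq_mul,
        hq', B_comm (x t) p']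
      ring
    have hv0 : v 0 = (2 * B n p' p) • p := by simp [hv, hx, hq]
    have hl0 : v 0 (lst hn) = 2 * B n p' p := by rw [hv0]; simp [ht]
    have hlc : Continuous fun t => v t (lst hn) := (continuous_apply _).comp hvc
    have hne0 : ∀ᶠ t in 𝓝 (0 : ℝ), v t (lst hn) ≠ 0 :=
      hlc.continuousAt.eventually_ne (by rw [hl0]; simpa using hpp)
    have htend : Tendsto (fun t => (v t (lst hn))⁻¹ • v t) (𝓝 0) (𝓝 p) := by
      have : p = (v 0 (lst hn))⁻¹ • v 0 := by
        rw [hl0, hv0, smul_smul, inv_mul_cancel₀ (by simpa using hpp), one_smul]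
      have h2 := ((hlc.tendsto 0).inv₀ (by rw [hl0]; simpa using hpp)).smul (hvc.tendsto 0)
      rwa [← this] at h2
    have hz : ∀ᶠ t in 𝓝 (0 : ℝ), B n u (v t) = 0 := by
      filter_upwards [hne0, htend.eventually h] with t h1 h2
      have h3 := h2 (null_eq_smul hn (hvnull t) (by rintro h; rw [h] at h1; simp at h1)).2
      simpa [h1] using h3
    have hz' : ∀ᶠ t in 𝓝 (0 : ℝ), (2 * B n p' p * B n u p) +
        (2 * B n p' p * B n u m + 2 * B n p' m * B n u p - 2 * B n p m * B n u p') * t +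
        (2 * B n p' m * B n u m - B n m m * B n u p') * t ^ 2 = 0 := by
      filter_upwards [hz] with t ht
      rw [← ht]
      simp only [hv, hx, map_sub, map_add, map_smul, LinearMap.add_apply, LinearMap.smul_apply,
        smul_eq_mul, hq, B_comm m p]
      ring
    obtain ⟨h1, h2, h3⟩ := quad_zero hz'
    have h4 : B n u p = 0 := by simpa [hpp] using h1
    refine ⟨h4, ?_, h3⟩
    rw [h4] at h2; linarith
  obtain ⟨r, hr, hrp, hrp'⟩ := exists_third hn p p'
  have hrq := ((mem_Q hn).1 hr).2
  -- Evaluating at a third point of `𝒬` kills `B u p'`.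
  have h5 := (main r).2.2
  have h6 := (main r).2.1
  have hup' : B n u p' = 0 := by
    rw [hrq] at h5
    have : B n u r = 0 := by simpa [B_Q_ne hn hp' hr hrp'.symm] using h5
    rw [this] at h6
    simpa [B_Q_ne hn hp hr hrp.symm] using h6
  refine B_nondeg fun m => ?_
  have := (main m).2.1
  rw [hup'] at this
  simpa [hpp] using this

/-- Finitely many hyperplanes can be avoided inside any neighbourhood of a point of `𝒬`. -/
lemma Q_dense (hn : 4 ≤ n) {ι : Type*} (F : Finset ι) (u : ι → Fin n → ℝ)
    (hu : ∀ i ∈ F, u i ≠ 0) {p : Fin n → ℝ} (hp : p ∈ QSet n) {U : Set (Fin n → ℝ)}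
    (hU : U ∈ 𝓝 p) : ∃ r ∈ QSet n, r ∈ U ∧ ∀ i ∈ F, B n (u i) r ≠ 0 := by
  classical
  induction F using Finset.induction_on generalizing p U with
  | empty => exact ⟨p, hp, mem_of_mem_nhds hU, by simp⟩
  | insert a F ha ih =>
    obtain ⟨r, hr, hrU, hr'⟩ := ih (fun i hi => hu i (Finset.mem_insert_of_mem hi)) hp
      (interior_mem_nhds.2 hU)
    have hnear : ∀ᶠ r' in 𝓝 r, r' ∈ U ∧ ∀ i ∈ F, B n (u i) r' ≠ 0 := by
      refine Filter.Eventually.and (mem_interior_iff_mem_nhds.1 hrU) ?_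
      rw [Filter.eventually_all_finset]
      intro i hi
      exact (continuous_B continuous_const continuous_id).continuousAt.eventually_ne (hr' i hi)
    by_contra! H
    refine hu a (Finset.mem_insert_self _ _) (Q_open hn hr ?_)
    filter_upwards [hnear] with r' h1 h2
    obtain ⟨i, hi, h3⟩ := H r' h2 h1.1
    rcases Finset.mem_insert.1 hi with rfl | hi
    · exact h3
    · exact absurd h3 (h1.2 i hi)

/-- Every vector is a combination of two opposite elements of `𝒬`. -/
lemma exists_decomp (hn : 4 ≤ n) (x : Fin n → ℝ) : ∃ p ∈ QSet n, ∃ p' ∈ QSet n,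
    p + p' = (2 : ℝ) • e0 hn ∧ B n p p' = 2 ∧
    x = ((x (lst hn) + √(E n x x)) / 2) • p + ((x (lst hn) - √(E n x x)) / 2) • p' := by
  have hee : B n (e0 hn) (e0 hn) = 1 := by rw [B_e0, e0_lst]
  have aux : ∀ p ∈ QSet n, (2 : ℝ) • e0 hn - p ∈ QSet n ∧ B n p ((2 : ℝ) • e0 hn - p) = 2 := by
    intro p hp
    obtain ⟨h1, h2⟩ := (mem_Q hn).1 hp
    have h3 : B n p (e0 hn) = 1 := by rw [B_e0, h1]
    refine ⟨(mem_Q hn).2 ⟨?_, ?_⟩, ?_⟩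
    · simp [e0_lst, h1]; norm_num
    · simp [hee, h2, h3, B_comm (e0 hn) p]; norm_num
    · simp [h2, h3]
  rcases (E_nonneg x).eq_or_lt with h0 | hpos
  · obtain ⟨p, -, -, hp, -⟩ := exists_three hn
    refine ⟨p, hp, _, (aux p hp).1, by abel, (aux p hp).2, ?_⟩
    have hx : x - x (lst hn) • e0 hn = 0 := by
      refine eq_zero_of_E hn ?_ (by simp [e0_lst])
      have h1 : B n (x - x (lst hn) • e0 hn) (x - x (lst hn) • e0 hn) = 0 := by
        simp only [map_sub, map_smul, LinearMap.sub_apply, LinearMap.smul_apply, hee, B_e0,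
          B_comm (e0 hn) x, smul_eq_mul]
        rw [B_eq hn x x, ← h0]; ring
      rw [B_eq hn] at h1
      simp only [Pi.sub_apply, Pi.smul_apply, e0_lst, smul_eq_mul] at h1
      linarith
    rw [← h0, Real.sqrt_zero, add_zero, sub_zero, ← smul_add, add_sub_cancel, smul_smul,
      div_mul_cancel₀ _ (two_ne_zero)]
    exact sub_eq_zero.1 hx
  · have hr := Real.sqrt_pos.2 hpos
    have hr2 := Real.sq_sqrt (E_nonneg x)
    set r := √(E n x x) with hrdef
    set u := x - x (lst hn) • e0 hn with hu
    have hul : u (lst hn) = 0 := by simp [hu, e0_lst]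
    have huu : B n u u = - r ^ 2 := by
      simp only [hu, map_sub, map_smul, LinearMap.sub_apply, LinearMap.smul_apply, hee, B_e0,
          B_comm (e0 hn) x, smul_eq_mul]
      rw [B_eq hn x x, hr2]; ring
    have hp : e0 hn + r⁻¹ • u ∈ QSet n := by
      refine (mem_Q hn).2 ⟨by simp [hul, e0_lst], ?_⟩
      simp only [map_add, map_smul, LinearMap.add_apply, LinearMap.smul_apply, hee, B_e0, hul,
        huu, B_comm (e0 hn) u, smul_eq_mul]
      field_simp; ring
    refine ⟨_, hp, _, (aux _ hp).1, by abel, (aux _ hp).2, ?_⟩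
    have : x = x (lst hn) • e0 hn + r • (r⁻¹ • u) := by
      rw [smul_smul, mul_inv_cancel₀ hr.ne', one_smul, hu]; abel
    nth_rw 1 [this]
    module

lemma exists_Q_pos_neg (hn : 4 ≤ n) {x : Fin n → ℝ} (hx : B n x x < 0) :
    (∃ p ∈ QSet n, B n x p < 0) ∧ ∃ p ∈ QSet n, 0 < B n x p := by
  obtain ⟨p, hp, p', hp', -, h2, h3⟩ := exists_decomp hn x
  have hr : |x (lst hn)| < √(E n x x) := by
    rw [B_eq hn] at hx
    rw [← Real.sqrt_sq_eq_abs]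
    exact Real.sqrt_lt_sqrt (sq_nonneg _) (by nlinarith)
  rw [abs_lt] at hr
  have hq := ((mem_Q hn).1 hp).2
  have hq' := ((mem_Q hn).1 hp').2
  refine ⟨⟨p, hp, ?_⟩, ⟨p', hp', ?_⟩⟩
  · rw [h3]
    simp only [map_add, map_smul, LinearMap.add_apply, LinearMap.smul_apply, hq, B_comm p' p, h2,
      smul_eq_mul]
    linarith
  · rw [h3]
    simp only [map_add, map_smul, LinearMap.add_apply, LinearMap.smul_apply, hq', h2,
      smul_eq_mul]
    linarith

lemma timelike_sign (hn : 4 ≤ n) {x p : Fin n → ℝ} (hx : 0 < B n x x) (hp : p ∈ QSet n) :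
    0 < x (lst hn) * B n x p := by
  obtain ⟨h1, h2⟩ := (mem_Q hn).1 hp
  have hE := E_cs x p
  rw [B_eq hn] at hx h2 ⊢
  rw [h1] at *
  have hEp : E n p p = 1 := by linarith
  rw [hEp] at hE
  have h3 : |E n x p| < |x (lst hn)| := sq_lt_sq.1 (by nlinarith)
  have h4 : x (lst hn) * E n x p ≤ |x (lst hn)| * |E n x p| := by
    rw [← abs_mul]; exact le_abs_self _
  have h5 : |x (lst hn)| * |E n x p| < |x (lst hn)| * |x (lst hn)| :=
    mul_lt_mul_of_pos_left h3 (lt_of_le_of_lt (abs_nonneg _) h3)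
  rw [abs_mul_abs_self] at h5
  nlinarith

/-- A spacelike vector is orthogonal to some element of `𝒬`. -/
lemma exists_Q_perp (hn : 4 ≤ n) {u : Fin n → ℝ} (hu : B n u u < 0) :
    ∃ p ∈ QSet n, B n u p = 0 := by
  obtain ⟨⟨p, hp, h1⟩, ⟨p', hp', h2⟩⟩ := exists_Q_pos_neg hn hu
  obtain ⟨r, hr, hrp, hrp'⟩ := exists_third hn p p'
  have hpp : p ≠ p' := by rintro rfl; linarith
  have hq := ((mem_Q hn).1 hp).2
  have hq' := ((mem_Q hn).1 hp').2
  have hqr := ((mem_Q hn).1 hr).2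
  have a1 := B_Q_pos hn hr hp hrp
  have a2 := B_Q_pos hn hr hp' hrp'
  have a3 := B_Q_pos hn hp hp' hpp
  -- The null curve joining `p` to `p'` obtained by reflecting `r` in the points of `[p, p']`.
  set x : ℝ → Fin n → ℝ := fun t => (1 - t) • p + t • p' with hx
  set v : ℝ → Fin n → ℝ := fun t => (2 * B n r (x t)) • x t - B n (x t) (x t) • r with hv
  have hxc : Continuous x := by fun_prop
  have hvc : Continuous v := by
    have h1 : Continuous fun t => B n r (x t) := continuous_B continuous_const hxc
    have h2 : Continuous fun t => B n (x t) (x t) := continuous_B hxc hxc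
    fun_prop
  have hvnull : ∀ t, B n (v t) (v t) = 0 := by
    intro t
    simp only [hv, map_sub, map_smul, LinearMap.sub_apply, LinearMap.smul_apply, smul_eq_mul,
      hqr, B_comm (x t) r]
    ring
  have hcont : ContinuousOn (fun t => B n u (v t)) (Icc 0 1) :=
    (continuous_B continuous_const hvc).continuousOn
  have hv0 : v 0 = (2 * B n r p) • p := by simp [hv, hx, hq]
  have hv1 : v 1 = (2 * B n r p') • p' := by simp [hv, hx, hq']
  have : (0 : ℝ) ∈ Icc (B n u (v 0)) (B n u (v 1)) := by
    rw [hv0, hv1]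
    simp only [map_smul, smul_eq_mul]
    constructor <;> nlinarith
  obtain ⟨t, ht, h0⟩ := intermediate_value_Icc zero_le_one hcont this
  have hvt : v t ≠ 0 := by
    intro h
    have e1 : B n r (v t) = 2 * B n r (x t) ^ 2 := by
      simp only [hv, map_sub, map_smul, smul_eq_mul, hqr]; ring
    have e2 : B n r (x t) = (1 - t) * B n r p + t * B n r p' := by simp [hx]
    rw [h, map_zero] at e1
    have : 0 < B n r (x t) := by
      rw [e2]
      rcases ht.1.eq_or_lt with rfl | ht'
      · simpa using a1
      · have := mul_nonneg (sub_nonneg.2 ht.2) a1.le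
        have := mul_pos ht' a2
        linarith
    nlinarith
  obtain ⟨h3, h4⟩ := null_eq_smul hn (hvnull t) hvt
  exact ⟨_, h4, by simp only [map_smul, smul_eq_mul]; rw [show B n u (v t) = 0 from h0, mul_zero]⟩

/-- Every small vector is the sum of two small null vectors. -/
lemma small_decomp (hn : 4 ≤ n) {ε : ℝ} (hε : 0 < ε) : ∀ᶠ u in 𝓝 (0 : Fin n → ℝ),
    ∃ v, B n v v = 0 ∧ B n (u - v) (u - v) = 0 ∧ ‖v‖ < ε := by
  have hc : Continuous fun u : Fin n → ℝ => |u (lst hn)| + √(E n u u) := by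
    have : Continuous fun u : Fin n → ℝ => E n u u := by
      unfold E
      refine continuous_finsetSum _ fun i _ => ?_
      split_ifs <;> fun_prop
    fun_prop
  have hlt : ∀ᶠ u in 𝓝 (0 : Fin n → ℝ), |u (lst hn)| + √(E n u u) < ε := by
    refine hc.continuousAt.eventually_lt_const ?_
    simpa [E] using hε
  filter_upwards [hlt] with u hu
  obtain ⟨p, hp, p', hp', -, -, h3⟩ := exists_decomp hn u
  have hq := ((mem_Q hn).1 hp).2
  have hq' := ((mem_Q hn).1 hp').2
  refine ⟨((u (lst hn) + √(E n u u)) / 2) • p, by simp [hq], ?_, ?_⟩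
  · have h4 : u - ((u (lst hn) + √(E n u u)) / 2) • p = ((u (lst hn) - √(E n u u)) / 2) • p' :=
      sub_eq_iff_eq_add'.2 h3
    rw [h4]; simp [hq']
  · have hp1 : ‖p‖ ≤ 1 := by
      refine (pi_norm_le_iff_of_nonneg zero_le_one).2 fun i => ?_
      rw [Real.norm_eq_abs]
      by_cases hi : (i : ℕ) = n - 1
      · rw [(eq_lst_iff hn i).1 hi, ((mem_Q hn).1 hp).1, abs_one]
      · have hE : E n p p = 1 := by
          have := hq
          rw [B_eq hn, ((mem_Q hn).1 hp).1] at this; linarith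
        have h5 : p i * p i ≤ E n p p := by
          have := Finset.single_le_sum
            (f := fun i : Fin n => if (i : ℕ) = n - 1 then 0 else p i * p i)
            (fun i _ => by split_ifs; exacts [le_rfl, mul_self_nonneg _]) (Finset.mem_univ i)
          simp only [hi, if_false] at this
          exact this
        rw [hE] at h5
        exact abs_le_one_iff_mul_self_le_one.2 h5
    rw [norm_smul, Real.norm_eq_abs]
    have h6 : |(u (lst hn) + √(E n u u)) / 2| ≤ |u (lst hn)| + √(E n u u) := by
      have h7 := Real.sqrt_nonneg (E n u u)
      have h8 := abs_le.1 (le_refl |u (lst hn)|)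
      rw [abs_le]; constructor <;> linarith [h8.1, h8.2]
    calc _ ≤ |(u (lst hn) + √(E n u u)) / 2| * 1 := by gcongr
      _ < ε := by linarith

/-- A linear map preserving null vectors scales the quadratic form. -/
lemma similarity (hn : 4 ≤ n) (A : (Fin n → ℝ) →ₗ[ℝ] (Fin n → ℝ))
    (hA : ∀ v, B n v v = 0 → B n (A v) (A v) = 0) :
    ∃ l : ℝ, ∀ v, B n (A v) (A v) = l * B n v v := by
  refine ⟨B n (A (e0 hn)) (A (e0 hn)), fun x => ?_⟩
  obtain ⟨p, hp, p', hp', h1, h2, h3⟩ := exists_decomp hn x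
  have hq := ((mem_Q hn).1 hp).2
  have hq' := ((mem_Q hn).1 hp').2
  have hs : B n (A p) (A p') = 2 * B n (A (e0 hn)) (A (e0 hn)) := by
    have : B n (A (p + p')) (A (p + p')) = B n (A ((2 : ℝ) • e0 hn)) (A ((2 : ℝ) • e0 hn)) := by
      rw [h1]
    simp only [map_add, map_smul, LinearMap.add_apply, LinearMap.smul_apply, hA p hq, hA p' hq',
      B_comm (A p') (A p), smul_eq_mul] at this
    linarith
  rw [h3]
  simp only [map_add, map_smul, LinearMap.add_apply, LinearMap.smul_apply, hA p hq, hA p' hq',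
      B_comm (A p') (A p), B_comm p' p, hs, hq, hq', h2, smul_eq_mul]
  ring

lemma dense_q (hn : 4 ≤ n) : Dense {x : Fin n → ℝ | B n x x ≠ 0} := by
  intro x
  rw [mem_closure_iff_frequently]
  intro h
  have hc : Tendsto (fun t : ℝ => x + t • e0 hn) (𝓝 0) (𝓝 x) := by
    have : Continuous fun t : ℝ => x + t • e0 hn := by fun_prop
    simpa using this.tendsto 0
  have : ∀ᶠ t : ℝ in 𝓝 0, B n x x + (2 * B n x (e0 hn)) * t + 1 * t ^ 2 = 0 := by
    filter_upwards [hc.eventually h] with t ht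
    simp only [not_not, map_add, map_smul, LinearMap.add_apply,
      LinearMap.smul_apply, B_comm (e0 hn) x, B_e0, e0_lst, smul_eq_mul] at ht
    rw [B_e0]; linarith
  exact one_ne_zero (quad_zero this).2.2

lemma dense_p (hn : 4 ≤ n) {p : Fin n → ℝ} (hp : p ∈ QSet n) :
    Dense {x : Fin n → ℝ | B n x p ≠ 0} := by
  intro x
  rw [mem_closure_iff_frequently]
  intro h
  have hc : Tendsto (fun t : ℝ => x + t • e0 hn) (𝓝 0) (𝓝 x) := by
    have : Continuous fun t : ℝ => x + t • e0 hn := by fun_prop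
    simpa using this.tendsto 0
  have : ∀ᶠ t : ℝ in 𝓝 0, B n x p + 1 * t + 0 * t ^ 2 = 0 := by
    filter_upwards [hc.eventually h] with t ht
    simp only [not_not, map_add, map_smul, LinearMap.add_apply,
      LinearMap.smul_apply, B_comm (e0 hn) p, B_e0, ((mem_Q hn).1 hp).1, smul_eq_mul] at ht
    linarith
  exact one_ne_zero (quad_zero this).2.1

/-- A continuous locally additive real function is linear near `0`. -/
lemma additive_linear {H : ℝ → ℝ} {δ : ℝ} (hδ : 0 < δ) (hc : ContinuousOn H (Icc (-δ) δ))
    (hadd : ∀ a b, |a| ≤ δ → |b| ≤ δ → |a + b| ≤ δ → H (a + b) = H a + H b) :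
    ∃ g : ℝ, ∀ x, |x| ≤ δ → H x = g * x := by
  set F : ℝ → ℝ := fun x => H x - (H δ / δ) * x with hF
  have hFadd : ∀ a b, |a| ≤ δ → |b| ≤ δ → |a + b| ≤ δ → F (a + b) = F a + F b := by
    intro a b ha hb hab
    simp only [hF, hadd a b ha hb hab]; ring
  have hFδ : F δ = 0 := by simp only [hF]; field_simp; ring
  have hFc : ContinuousOn (fun x => |F x|) (Icc 0 δ) := by
    have h1 : ContinuousOn H (Icc 0 δ) := hc.mono (Icc_subset_Icc (by linarith) le_rfl)
    fun_prop
  obtain ⟨m, hm, hmax⟩ := isCompact_Icc.exists_isMaxOn (nonempty_Icc.2 hδ.le) hFc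
  -- Doubling the smaller of `m` and `δ - m` would double the maximum of `|F|`.
  have hhalf : ∀ y, 0 ≤ y → y ≤ δ / 2 → |F y| = |F m| → |F m| = 0 := by
    intro y h1 h2 h3
    have h4 := hmax (show y + y ∈ Icc 0 δ from ⟨by linarith, by linarith⟩)
    have hy : |y| ≤ δ := by rw [abs_of_nonneg h1]; linarith
    have h5 := hFadd y y hy hy (by rw [abs_of_nonneg] <;> linarith)
    simp only [mem_ofPred_eq] at h4
    rw [h5, ← two_mul, abs_mul, abs_two, h3] at h4
    linarith [abs_nonneg (F m)]
  have hM : |F m| = 0 := by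
    rcases le_total m (δ / 2) with h | h
    · exact hhalf m hm.1 h rfl
    · refine hhalf (δ - m) (by linarith [hm.2]) (by linarith) ?_
      have := hFadd (δ - m) m (by rw [abs_of_nonneg] <;> linarith [hm.1, hm.2])
        (by rw [abs_of_nonneg] <;> linarith [hm.1, hm.2])
        (by rw [sub_add_cancel, abs_of_pos hδ])
      rw [sub_add_cancel, hFδ] at this
      rw [show F (δ - m) = - F m by linarith, abs_neg]
  have hpos : ∀ x, 0 ≤ x → x ≤ δ → F x = 0 := by
    intro x h1 h2
    have := hmax (show x ∈ Icc 0 δ from ⟨h1, h2⟩)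
    simp only [mem_ofPred_eq] at this
    rw [hM] at this
    exact abs_eq_zero.1 (le_antisymm this (abs_nonneg _))
  refine ⟨H δ / δ, fun x hx => ?_⟩
  suffices F x = 0 by simp only [hF] at this; linarith
  rcases le_total 0 x with h | h
  · exact hpos x h (abs_le.1 hx).2
  · have h1 := hFadd x (-x) hx (by rwa [abs_neg]) (by simpa using hδ.le)
    have h2 := hpos (-x) (by linarith) (by linarith [(abs_le.1 hx).1])
    have h3 := hpos 0 le_rfl hδ.le
    rw [add_neg_cancel, h2, h3] at h1
    linarith

/-! ### Inversion -/

/-- The inversion `x ↦ 2x / q(x)`, an involution of the set `q ≠ 0`. -/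
noncomputable def iv (n : ℕ) (x : Fin n → ℝ) : Fin n → ℝ := (2 / B n x x) • x

lemma B_iv (x v : Fin n → ℝ) : B n (iv n x) v = 2 / B n x x * B n x v := by simp [iv]

lemma q_iv {x : Fin n → ℝ} (hx : B n x x ≠ 0) : B n (iv n x) (iv n x) = 4 / B n x x := by
  simp only [iv, map_smul, LinearMap.smul_apply, smul_eq_mul]; field_simp; norm_num

lemma q_iv_ne {x : Fin n → ℝ} (hx : B n x x ≠ 0) : B n (iv n x) (iv n x) ≠ 0 := by
  rw [q_iv hx]; exact div_ne_zero (by norm_num) hx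

lemma iv_iv {x : Fin n → ℝ} (hx : B n x x ≠ 0) : iv n (iv n x) = x := by
  rw [iv, q_iv hx, iv, smul_smul]
  convert one_smul ℝ x
  field_simp; norm_num

lemma iv_smul {t : ℝ} (ht : t ≠ 0) (x : Fin n → ℝ) : iv n (t • x) = t⁻¹ • iv n x := by
  simp only [iv, map_smul, LinearMap.smul_apply, smul_eq_mul, smul_smul]
  congr 1
  by_cases h : B n x x = 0
  · simp [h]
  · field_simp

lemma continuousAt_iv {x : Fin n → ℝ} (hx : B n x x ≠ 0) : ContinuousAt (iv n) x := by
  have h : ContinuousAt (fun x : Fin n → ℝ => B n x x) x :=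
    (continuous_B continuous_id continuous_id).continuousAt
  exact (continuousAt_const.div h hx).smul continuousAt_id

lemma q_iv_sub {x y : Fin n → ℝ} (hx : B n x x ≠ 0) (hy : B n y y ≠ 0)
    (h : B n (x - y) (x - y) = 0) : B n (iv n x - iv n y) (iv n x - iv n y) = 0 := by
  simp only [map_sub, LinearMap.sub_apply, B_comm y x] at h
  simp only [iv, map_sub, map_smul, LinearMap.sub_apply, LinearMap.smul_apply, smul_eq_mul,
    B_comm y x]
  field_simp
  linear_combination 4 * h

/-! ### The inverted map and the basic functional relations -/

/-- A continuous non-degenerate coherency preserver `φ` fixing `0`, together with a nonconstant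
map `ψ` describing its action on the null lines through `0`. -/
structure Pres (n : ℕ) (φ ψ : (Fin n → ℝ) → (Fin n → ℝ)) : Prop where
  hn : 4 ≤ n
  cont : Continuous φ
  pres : ∀ a b, B n (b - a) (b - a) = 0 → B n (φ b - φ a) (φ b - φ a) = 0
  nd : ¬ ∃ s, ∀ x, B n (φ x - s) (φ x - s) = 0
  zero : φ 0 = 0
  psi : ∀ p ∈ QSet n, ψ p ∈ QSet n
  line : ∀ p ∈ QSet n, ∀ t : ℝ, ∃ s : ℝ, φ (t • p) = s • ψ p
  nonconst : ∃ p ∈ QSet n, ∃ p' ∈ QSet n, ψ p ≠ ψ p'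

/-- The map `φ` conjugated by the inversion. -/
noncomputable def z (n : ℕ) (φ : (Fin n → ℝ) → (Fin n → ℝ)) (w : Fin n → ℝ) : Fin n → ℝ :=
  iv n (φ (iv n w))

/-- The open set on which the conjugated map `z` is meaningful. -/
def Om (n : ℕ) (φ : (Fin n → ℝ) → (Fin n → ℝ)) : Set (Fin n → ℝ) :=
  {w | B n w w ≠ 0 ∧ B n (φ (iv n w)) (φ (iv n w)) ≠ 0}

namespace Pres

variable {φ ψ : (Fin n → ℝ) → (Fin n → ℝ)}

lemma continuousAt_z (H : Pres n φ ψ) {w : Fin n → ℝ} (hw : w ∈ Om n φ) : ContinuousAt (z n φ) w :=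
  (continuousAt_iv hw.2).comp (f := fun w => φ (iv n w))
    (H.cont.continuousAt.comp (continuousAt_iv hw.1))

lemma Om_nhds (H : Pres n φ ψ) {w : Fin n → ℝ} (hw : w ∈ Om n φ) : ∀ᶠ v in 𝓝 w, v ∈ Om n φ := by
  have h1 : ContinuousAt (fun w => B n w w) w :=
    (continuous_B continuous_id continuous_id).continuousAt
  have h2 : ContinuousAt (fun w => B n (φ (iv n w)) (φ (iv n w))) w :=
    ContinuousAt.comp (g := fun w => B n (φ w) (φ w)) (f := iv n)
      (continuous_B H.cont H.cont).continuousAt (continuousAt_iv hw.1)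
  exact (h1.eventually_ne hw.1).and (h2.eventually_ne hw.2)

/-- The null line through `0` and direction `p` meets the null cone of `x` in the point `t • p`,
and its image is coherent to `φ x`. -/
lemma cone (H : Pres n φ ψ)
    {x p : Fin n → ℝ} {t : ℝ} (hp : p ∈ QSet n) (h : B n x x = 2 * t * B n x p) :
    ∃ s : ℝ, φ (t • p) = s • ψ p ∧ B n (φ x) (φ x) = 2 * s * B n (φ x) (ψ p) := by
  obtain ⟨s, hs⟩ := H.line p hp t
  refine ⟨s, hs, ?_⟩
  have h1 := H.pres (t • p) x (by
    simp only [map_sub, map_smul, LinearMap.sub_apply, LinearMap.smul_apply, smul_eq_mul,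
      B_comm p x, ((mem_Q H.hn).1 hp).2]
    linarith)
  rw [hs] at h1
  simp only [map_sub, map_smul, LinearMap.sub_apply, LinearMap.smul_apply, smul_eq_mul,
      B_comm (ψ p) (φ x), ((mem_Q H.hn).1 (H.psi p hp)).2] at h1
  linarith

/-- The image of the point where the null cone of `iv w` meets `ℝ p`, in terms of `z w`. -/
lemma rel (H : Pres n φ ψ)
    {w p : Fin n → ℝ} (hw : w ∈ Om n φ) (hp : p ∈ QSet n) (hs : B n w p ≠ 0) :
    ∃ h : ℝ, φ ((B n w p)⁻¹ • p) = h • ψ p ∧ h * B n (z n φ w) (ψ p) = 1 := by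
  have hq := hw.1
  obtain ⟨h, h1, h2⟩ := H.cone (x := iv n w) (t := (B n w p)⁻¹) hp (by
    rw [q_iv hw.1, B_iv]; field_simp; norm_num)
  refine ⟨h, h1, ?_⟩
  have hq2 := hw.2
  rw [z, B_iv]
  field_simp
  linarith

/-- `B (z w) (ψ p)` depends on `w` only through `B w p`. -/
lemma rel_eq (H : Pres n φ ψ)
    {w w' p : Fin n → ℝ} (hw : w ∈ Om n φ) (hw' : w' ∈ Om n φ) (hp : p ∈ QSet n)
    (hs : B n w p ≠ 0) (he : B n w' p = B n w p) : B n (z n φ w') (ψ p) = B n (z n φ w) (ψ p) := by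
  obtain ⟨h, h1, h2⟩ := H.rel hw hp hs
  obtain ⟨h', h1', h2'⟩ := H.rel hw' hp (he ▸ hs)
  rw [he, h1] at h1'
  have : h = h' := smul_left_injective ℝ (ne_zero_of_Q H.hn (H.psi p hp)) h1'
  subst this
  have h0 : h ≠ 0 := by rintro rfl; simp at h2
  exact mul_left_cancel₀ h0 (h2'.trans h2.symm)

/-- The inverted map sends coherent points to coherent points. -/
lemma null (H : Pres n φ ψ) {w w' : Fin n → ℝ} (hw : w ∈ Om n φ) (hw' : w' ∈ Om n φ)
    (h : B n (w - w') (w - w') = 0) :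
    B n (z n φ w - z n φ w') (z n φ w - z n φ w') = 0 :=
  q_iv_sub hw.2 hw'.2 (H.pres _ _ (q_iv_sub hw.1 hw'.1 h))

/-- No null line through `0` is collapsed to `0`. -/
lemma exists_ne (H : Pres n φ ψ) {p : Fin n → ℝ} (hp : p ∈ QSet n) : ∃ t : ℝ, φ (t • p) ≠ 0 := by
  by_contra! h
  refine H.nd ⟨0, fun x => ?_⟩
  have hcl : IsClosed {x | B n (φ x) (φ x) = 0} :=
    isClosed_eq (continuous_B H.cont H.cont) continuous_const
  have hsub : {x | B n x p ≠ 0} ⊆ {x | B n (φ x) (φ x) = 0} := by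
    intro x hx
    have hx' : B n x p ≠ 0 := hx
    obtain ⟨s, h1, h2⟩ := H.cone (x := x) (t := B n x x / (2 * B n x p)) hp (by field_simp)
    rw [h] at h1
    have : s = 0 := (smul_eq_zero.1 h1.symm).resolve_right (ne_zero_of_Q H.hn (H.psi p hp))
    rw [this] at h2
    change B n (φ x) (φ x) = 0
    linarith
  rw [sub_zero]
  exact hcl.closure_subset_iff.2 hsub (dense_p H.hn hp x)

/-- `ψ` takes two values off any finite union of hyperplanes. -/
lemma exists_two (H : Pres n φ ψ)
    {ι : Type*} (F : Finset ι) (u : ι → Fin n → ℝ) (hu : ∀ i ∈ F, u i ≠ 0) :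
    ∃ p ∈ QSet n, ∃ p' ∈ QSet n, ψ p ≠ ψ p' ∧ (∀ i ∈ F, B n (u i) p ≠ 0) ∧
      ∀ i ∈ F, B n (u i) p' ≠ 0 := by
  by_contra! h
  obtain ⟨a, ha, a', ha', hne⟩ := H.nonconst
  obtain ⟨p0, hp0, -, hg0⟩ := Q_dense H.hn F u hu ha univ_mem
  have key : ∀ p ∈ QSet n, ψ p = ψ p0 := by
    intro p hp
    obtain ⟨t, ht⟩ := H.exists_ne hp
    have hcl : IsClosed {r | φ (t • r) = (φ (t • r) (lst H.hn)) • ψ p0} := by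
      have := H.cont
      refine isClosed_eq (by fun_prop) (by fun_prop)
    have hmem : p ∈ {r | φ (t • r) = (φ (t • r) (lst H.hn)) • ψ p0} := by
      rw [← hcl.closure_eq, mem_closure_iff_nhds]
      intro U hU
      obtain ⟨r, hr, hrU, hrg⟩ := Q_dense H.hn F u hu hp hU
      refine ⟨r, hrU, ?_⟩
      obtain ⟨s, hs⟩ := H.line r hr t
      have hψ : ψ r = ψ p0 := by
        by_contra hne
        obtain ⟨i, hi, h1⟩ := h r hr p0 hp0 hne hrg
        exact hg0 i hi h1
      change φ (t • r) = (φ (t • r) (lst H.hn)) • ψ p0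
      rw [hs, hψ]
      simp [((mem_Q H.hn).1 (H.psi p0 hp0)).1]
    have hmem' : φ (t • p) = (φ (t • p) (lst H.hn)) • ψ p0 := hmem
    obtain ⟨s, hs⟩ := H.line p hp t
    have h1 : φ (t • p) (lst H.hn) = s := by
      rw [hs]; simp [((mem_Q H.hn).1 (H.psi p hp)).1]
    rw [h1, hs] at hmem'
    have hs0 : s ≠ 0 := by rintro rfl; exact ht (by simpa using hs)
    exact smul_right_injective _ hs0 hmem'
  exact hne ((key a ha).trans (key a' ha').symm)

/-- If `B (z ·) (ψ p)` does not vary along one direction transverse to `p`, then it is locally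
constant, as it is a function of `B · p` only. -/
lemma locconst_of_dir (H : Pres n φ ψ) {w0 p u : Fin n → ℝ} (hw : w0 ∈ Om n φ) (hp : p ∈ QSet n)
    (h0 : B n w0 p ≠ 0) (hu : B n u p ≠ 0)
    (h : ∀ᶠ t : ℝ in 𝓝 0, B n (z n φ (w0 + t • u)) (ψ p) = B n (z n φ w0) (ψ p)) :
    ∀ᶠ w in 𝓝 w0, B n (z n φ w) (ψ p) = B n (z n φ w0) (ψ p) := by
  have hc : Continuous fun w : Fin n → ℝ => B n (w - w0) p / B n u p :=
    (continuous_B (by fun_prop) continuous_const).div_const _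
  have ht : Tendsto (fun w : Fin n → ℝ => B n (w - w0) p / B n u p) (𝓝 w0) (𝓝 0) := by
    simpa using hc.tendsto w0
  have ht2 : Tendsto (fun t : ℝ => w0 + t • u) (𝓝 0) (𝓝 w0) := by
    have : Continuous fun t : ℝ => w0 + t • u := by fun_prop
    simpa using this.tendsto 0
  have hne : ∀ᶠ w in 𝓝 w0, B n w p ≠ 0 :=
    (continuous_B continuous_id continuous_const).continuousAt.eventually_ne h0
  filter_upwards [ht.eventually h, (ht2.comp ht).eventually (H.Om_nhds hw), H.Om_nhds hw, hne]
    with w h1 h2 h3 h4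
  rw [← h1]
  refine (H.rel_eq h3 h2 hp h4 ?_).symm
  simp only [Function.comp_apply, map_add, map_sub, map_smul, LinearMap.add_apply,
    LinearMap.sub_apply, LinearMap.smul_apply, smul_eq_mul]
  field_simp
  ring

/-- If `B (z ·) (ψ p)` is locally constant for two distinct values of `ψ p`, then `z` is locally
constant, because `z` maps null steps to null steps. -/
lemma locconst_of_two (H : Pres n φ ψ) {w0 p p' : Fin n → ℝ} (hw : w0 ∈ Om n φ) (hp : p ∈ QSet n)
    (hp' : p' ∈ QSet n) (hne : ψ p ≠ ψ p')
    (h : ∀ᶠ w in 𝓝 w0, B n (z n φ w) (ψ p) = B n (z n φ w0) (ψ p))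
    (h' : ∀ᶠ w in 𝓝 w0, B n (z n φ w) (ψ p') = B n (z n φ w0) (ψ p')) :
    ∀ᶠ w in 𝓝 w0, z n φ w = z n φ w0 := by
  obtain ⟨ε, hε, hb⟩ := Metric.eventually_nhds_iff.1 ((h.and h').and (H.Om_nhds hw))
  have step : ∀ a b, a ∈ Metric.ball w0 ε → b ∈ Metric.ball w0 ε → B n (a - b) (a - b) = 0 →
      z n φ a = z n φ b := by
    intro a b ha hb' hab
    obtain ⟨⟨a1, a2⟩, a3⟩ := hb ha
    obtain ⟨⟨b1, b2⟩, b3⟩ := hb hb'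
    refine sub_eq_zero.1 (null_perp_two H.hn (H.psi p hp) (H.psi p' hp') hne
      (H.null a3 b3 hab) ?_ ?_)
    · rw [map_sub, LinearMap.sub_apply, a1, b1, sub_self]
    · rw [map_sub, LinearMap.sub_apply, a2, b2, sub_self]
  have ht : Tendsto (fun w : Fin n → ℝ => w - w0) (𝓝 w0) (𝓝 0) := by
    have : Continuous fun w : Fin n → ℝ => w - w0 := by fun_prop
    simpa using this.tendsto w0
  filter_upwards [ht.eventually (small_decomp H.hn hε), Metric.ball_mem_nhds w0 hε]
    with w ⟨v, hv1, hv2, hv3⟩ hwb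
  have hvb : w0 + v ∈ Metric.ball w0 ε := by simpa [Metric.mem_ball, dist_eq_norm] using hv3
  rw [step w (w0 + v) hwb hvb (by rwa [← sub_sub]),
    step (w0 + v) w0 hvb (Metric.mem_ball_self hε) (by simpa using hv1)]

end Pres

/-! ### The inverted map is locally affine -/

namespace Pres

variable {φ ψ : (Fin n → ℝ) → (Fin n → ℝ)}

lemma ne_zero_of_Om {w : Fin n → ℝ} (hw : w ∈ Om n φ) : w ≠ 0 := by
  rintro rfl; exact hw.1 (by simp)

/-- Unless `z` is locally constant at `w0`, there are `j` independent elements of `𝒬` in general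
position to `w0` whose images under `ψ` are independent. When such a family cannot be enlarged, a
direction `u` orthogonal to it leaves `B (z ·) (ψ p)` unchanged for all generic `p`. -/
lemma exists_indep (H : Pres n φ ψ) {w0 : Fin n → ℝ} (hw : w0 ∈ Om n φ) (j : ℕ) (hj : j ≤ n) :
    (∀ᶠ w in 𝓝 w0, z n φ w = z n φ w0) ∨ ∃ P : Fin j → Fin n → ℝ, (∀ i, P i ∈ QSet n) ∧
      (∀ i, B n w0 (P i) ≠ 0) ∧ LinearIndependent ℝ P ∧ LinearIndependent ℝ (fun i => ψ (P i)) := by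
  induction j with
  | zero =>
    exact Or.inr ⟨Fin.elim0, fun i => i.elim0, fun i => i.elim0,
      linearIndependent_empty_type, linearIndependent_empty_type⟩
  | succ j ih =>
    rcases ih (by omega) with h | ⟨P, hPQ, hP0, hP, hψP⟩
    · exact Or.inl h
    have hlt : Submodule.span ℝ (range P) < ⊤ := by
      refine Submodule.lt_top_of_finrank_lt_finrank ?_
      rw [finrank_span_eq_card hP]
      simpa using hj
    obtain ⟨f, hf0, hf⟩ := Submodule.exists_le_ker_of_lt_top _ hlt
    obtain ⟨u, hu⟩ := exists_repr f
    have hu0 : u ≠ 0 := by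
      rintro rfl
      refine hf0 (LinearMap.ext fun v => ?_)
      rw [← hu]; simp
    have huP : ∀ x ∈ Submodule.span ℝ (range P), B n u x = 0 := fun x hx => by
      rw [hu]; exact hf hx
    by_cases hex : ∃ p ∈ QSet n, B n w0 p ≠ 0 ∧ B n u p ≠ 0 ∧
        ψ p ∉ Submodule.span ℝ (range fun i => ψ (P i))
    · right
      obtain ⟨p, hp, h1, h2, h3⟩ := hex
      refine ⟨Fin.snoc (α := fun _ => Fin n → ℝ) P p, ?_, ?_,
        linearIndependent_finSnoc.2 ⟨hP, fun h => h2 (huP p h)⟩, ?_⟩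
      · intro i; induction i using Fin.lastCases <;> simp [hp, hPQ]
      · intro i; induction i using Fin.lastCases <;> simp [h1, hP0]
      · have : (fun i : Fin (j + 1) => ψ (Fin.snoc (α := fun _ => Fin n → ℝ) P p i)) =
            Fin.snoc (α := fun _ => Fin n → ℝ) (fun i => ψ (P i)) (ψ p) := by
          ext i; induction i using Fin.lastCases <;> simp
        rw [this]
        exact linearIndependent_finSnoc.2 ⟨hψP, h3⟩
    · left
      push Not at hex
      have hLC : ∀ p ∈ QSet n, B n w0 p ≠ 0 → B n u p ≠ 0 →
          ∀ᶠ w in 𝓝 w0, B n (z n φ w) (ψ p) = B n (z n φ w0) (ψ p) := by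
        intro p hp h1 h2
        refine H.locconst_of_dir hw hp h1 h2 ?_
        have ht2 : Tendsto (fun t : ℝ => w0 + t • u) (𝓝 0) (𝓝 w0) := by
          have : Continuous fun t : ℝ => w0 + t • u := by fun_prop
          simpa using this.tendsto 0
        filter_upwards [ht2.eventually (H.Om_nhds hw)] with t ht
        have hk : Submodule.span ℝ (range fun i => ψ (P i)) ≤
            LinearMap.ker (B n (z n φ (w0 + t • u) - z n φ w0)) := by
          rw [Submodule.span_le]
          rintro _ ⟨i, rfl⟩
          have := H.rel_eq hw ht (hPQ i) (hP0 i)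
            (by simp [huP _ (Submodule.subset_span (mem_range_self i))])
          simp [this]
        have := hk (hex p hp h1 h2)
        rw [LinearMap.mem_ker, map_sub, LinearMap.sub_apply] at this
        exact sub_eq_zero.1 this
      obtain ⟨p, hp, p', hp', hne, h1, h2⟩ := H.exists_two (ι := Fin 2) Finset.univ ![w0, u] (by
        intro i _; fin_cases i
        · exact ne_zero_of_Om hw
        · exact hu0)
      exact H.locconst_of_two hw hp hp' hne
        (hLC p hp (h1 0 (Finset.mem_univ _)) (h1 1 (Finset.mem_univ _)))
        (hLC p' hp' (h2 0 (Finset.mem_univ _)) (h2 1 (Finset.mem_univ _)))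

lemma eq_zero_of_basis (b : Module.Basis (Fin n) ℝ (Fin n → ℝ)) {y : Fin n → ℝ}
    (h : ∀ i, B n y (b i) = 0) : y = 0 := by
  have : B n y = 0 := b.ext fun i => by simpa using h i
  exact B_nondeg fun v => by rw [this]; rfl

/-- The inverted map is affine near each point, with linear part zero or invertible. -/
lemma affine (H : Pres n φ ψ) {w0 : Fin n → ℝ} (hw : w0 ∈ Om n φ) :
    ∃ (A : (Fin n → ℝ) →ₗ[ℝ] (Fin n → ℝ)) (b : Fin n → ℝ), (A = 0 ∨ Function.Bijective A) ∧
      ∀ᶠ w in 𝓝 w0, z n φ w = A w + b := by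
  have hconst : (∀ᶠ w in 𝓝 w0, z n φ w = z n φ w0) →
      ∃ (A : (Fin n → ℝ) →ₗ[ℝ] (Fin n → ℝ)) (b : Fin n → ℝ), (A = 0 ∨ Function.Bijective A) ∧
      ∀ᶠ w in 𝓝 w0, z n φ w = A w + b := fun h =>
    ⟨0, z n φ w0, Or.inl rfl, by simpa using h⟩
  rcases H.exists_indep hw n le_rfl with h | ⟨P, hPQ, hP0, hP, hψP⟩
  · exact hconst h
  have hcard : Fintype.card (Fin n) = Module.finrank ℝ (Fin n → ℝ) := by simp
  have : Nonempty (Fin n) := ⟨lst H.hn⟩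
  set bP := basisOfLinearIndependentOfCardEqFinrank hP hcard with hbP
  set bψ := basisOfLinearIndependentOfCardEqFinrank hψP hcard with hbψ
  have hbP' : ∀ i, bP i = P i := fun i => by simp [hbP]
  have hbψ' : ∀ i, bψ i = ψ (P i) := fun i => by simp [hbψ]
  choose u hu using fun i => exists_repr (bP.coord i)
  choose v hv using fun i => exists_repr (bψ.coord i)
  have huP : ∀ i k, B n (u i) (P k) = if k = i then 1 else 0 := by
    intro i k
    rw [hu, ← hbP', Module.Basis.coord_apply, Module.Basis.repr_self, Finsupp.single_apply]
  have hvP : ∀ i k, B n (v i) (ψ (P k)) = if k = i then 1 else 0 := by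
    intro i k
    rw [hv, ← hbψ', Module.Basis.coord_apply, Module.Basis.repr_self, Finsupp.single_apply]
  have hexp : ∀ y r, B n y r = ∑ k, B n (v k) r * B n y (ψ (P k)) := by
    intro y r
    conv_lhs => rw [← bψ.sum_repr r]
    simp [hv, hbψ']
  have hu0 : ∀ i, u i ≠ 0 := fun i h => by simpa [h] using huP i i
  have hlim : ∀ y, Tendsto (fun t : ℝ => w0 + t • y) (𝓝 0) (𝓝 w0) := fun y => by
    have : Continuous fun t : ℝ => w0 + t • y := by fun_prop
    simpa using this.tendsto 0
  by_cases hex : ∃ p ∈ QSet n, B n w0 p ≠ 0 ∧ (∀ i, B n (u i) p ≠ 0) ∧ ∀ i, B n (v i) (ψ p) ≠ 0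
  swap
  · refine hconst ?_
    push Not at hex
    have hLC : ∀ p ∈ QSet n, B n w0 p ≠ 0 → (∀ i, B n (u i) p ≠ 0) →
        ∀ᶠ w in 𝓝 w0, B n (z n φ w) (ψ p) = B n (z n φ w0) (ψ p) := by
      intro p hp h1 h2
      obtain ⟨i, hi⟩ := hex p hp h1 h2
      refine H.locconst_of_dir hw hp h1 (h2 i) ?_
      filter_upwards [(hlim (u i)).eventually (H.Om_nhds hw)] with t ht
      rw [hexp, hexp (z n φ w0)]
      refine Finset.sum_congr rfl fun k _ => ?_
      by_cases hk : k = i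
      · rw [hk, hi, zero_mul, zero_mul]
      · rw [H.rel_eq hw ht (hPQ k) (hP0 k) (by simp [huP, hk])]
    obtain ⟨p, hp, p', hp', hne, h1, h2⟩ := H.exists_two (ι := Option (Fin n)) Finset.univ
      (fun o => o.elim w0 u) (by
        rintro (_ | i) _
        · exact ne_zero_of_Om hw
        · exact hu0 i)
    exact H.locconst_of_two hw hp hp' hne
      (hLC p hp (h1 none (Finset.mem_univ _)) fun i => h1 (some i) (Finset.mem_univ _))
      (hLC p' hp' (h2 none (Finset.mem_univ _)) fun i => h2 (some i) (Finset.mem_univ _))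
  obtain ⟨p, hp, hp0, hc, hd⟩ := hex
  set N : Set (Fin n → ℝ) := {w | w ∈ Om n φ ∧ B n w p ≠ 0 ∧ ∀ i, B n w (P i) ≠ 0} with hN
  have hNn : ∀ᶠ w in 𝓝 w0, w ∈ N := by
    refine (H.Om_nhds hw).and (((continuous_B continuous_id
      continuous_const).continuousAt.eventually_ne hp0).and (eventually_all.2 fun i => ?_))
    exact (continuous_B continuous_id continuous_const).continuousAt.eventually_ne (hP0 i)
  set F : (Fin n → ℝ) → (Fin n → ℝ) → ℝ := fun r w => B n (z n φ w - z n φ w0) (ψ r) with hF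
  have hFp : ∀ w ∈ N, ∀ w' ∈ N, B n w' p = B n w p → F p w' = F p w := by
    intro w h1 w' h2 he
    simp only [hF, map_sub, LinearMap.sub_apply, H.rel_eq h1.1 h2.1 hp h1.2.1 he]
  have hFP : ∀ i, ∀ w ∈ N, ∀ w' ∈ N, B n w' (P i) = B n w (P i) → F (P i) w' = F (P i) w := by
    intro i w h1 w' h2 he
    simp only [hF, map_sub, LinearMap.sub_apply, H.rel_eq h1.1 h2.1 (hPQ i) (h1.2.2 i) he]
  have hF0 : ∀ r, F r w0 = 0 := fun r => by simp [hF]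
  have hFsum : ∀ w, F p w = ∑ k, B n (v k) (ψ p) * F (P k) w := fun w => hexp _ _
  have hw0N : w0 ∈ N := hNn.self_of_nhds
  -- Rescaled dual vectors, all pairing to `1` with `p`.
  set x : Fin n → Fin n → ℝ := fun i => (B n (u i) p)⁻¹ • u i with hx
  have hxp : ∀ i, B n (x i) p = 1 := fun i => by simp [hx, hc i]
  have hxP : ∀ i k, k ≠ i → B n (x i) (P k) = 0 := fun i k h => by simp [hx, huP, h]
  have hxPi : ∀ i, B n (x i) (P i) = (B n (u i) p)⁻¹ := fun i => by simp [hx, huP]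
  set i0 : Fin n := ⟨0, by have := H.hn; omega⟩
  set i1 : Fin n := ⟨1, by have := H.hn; omega⟩
  have h01 : i0 ≠ i1 := by simp [i0, i1]
  have hNx : ∀ i, ∀ᶠ t : ℝ in 𝓝 0, w0 + t • x i ∈ N := fun i => (hlim _).eventually hNn
  have hN2 : ∀ᶠ ab : ℝ × ℝ in 𝓝 (0, 0), w0 + ab.1 • x i0 + ab.2 • x i1 ∈ N := by
    have hcc : Continuous fun ab : ℝ × ℝ => w0 + ab.1 • x i0 + ab.2 • x i1 := by fun_prop
    have := hcc.tendsto (0, 0)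
    simp only [zero_smul, add_zero] at this
    exact this.eventually hNn
  obtain ⟨δ, hδ, hball⟩ : ∃ δ > 0, ∀ a b : ℝ, |a| ≤ δ → |b| ≤ δ →
      w0 + a • x i0 + b • x i1 ∈ N := by
    obtain ⟨δ, hδ, h⟩ := Metric.eventually_nhds_iff.1 hN2
    refine ⟨δ / 2, by linarith, fun a b ha hb => h (y := (a, b)) ?_⟩
    rw [Prod.dist_eq, max_lt_iff]
    simp only [Real.dist_eq, sub_zero]
    constructor <;> linarith
  have hb0 : ∀ a, |a| ≤ δ → w0 + a • x i0 ∈ N := fun a ha => by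
    simpa using hball a 0 ha (by simpa using hδ.le)
  have hb1 : ∀ a, |a| ≤ δ → w0 + a • x i1 ∈ N := fun a ha => by
    simpa using hball 0 a (by simpa using hδ.le) ha
  obtain ⟨g, hg⟩ := additive_linear (H := fun t => F p (w0 + t • x i0)) hδ (by
      intro t ht
      have h1 := H.continuousAt_z (hb0 t (abs_le.2 ht)).1
      have h2 : ContinuousAt (fun t : ℝ => w0 + t • x i0) t := by fun_prop
      have h3 : ContinuousAt (fun t : ℝ => z n φ (w0 + t • x i0) - z n φ w0) t :=
        (ContinuousAt.comp (f := fun t : ℝ => w0 + t • x i0) h1 h2).sub continuousAt_const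
      have h4 : Continuous fun y => B n y (ψ p) := continuous_B continuous_id continuous_const
      exact (h4.continuousAt.comp h3).continuousWithinAt) (by
      intro a b ha hb hab
      have e1 : F p (w0 + (a + b) • x i0) = F p (w0 + a • x i0 + b • x i1) :=
        hFp _ (hball a b ha hb) _ (hb0 _ hab) (by simp [hxp]; ring)
      have e2 : F p (w0 + b • x i0) = F p (w0 + b • x i1) :=
        hFp _ (hb1 b hb) _ (hb0 b hb) (by simp [hxp])
      change F p (w0 + (a + b) • x i0) = F p (w0 + a • x i0) + F p (w0 + b • x i0)
      rw [e1, e2, hFsum, hFsum (w0 + a • x i0), hFsum (w0 + b • x i1), ← Finset.sum_add_distrib]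
      refine Finset.sum_congr rfl fun k _ => ?_
      rw [← mul_add]
      congr 1
      by_cases hk : k = i1
      · have hk0 : k ≠ i0 := fun h => h01 (h.symm.trans hk)
        rw [hFP k _ (hb1 b hb) _ (hball a b ha hb) (by simp [hxP i0 k hk0]),
          hFP k _ hw0N _ (hb0 a ha) (by simp [hxP i0 k hk0]), hF0, zero_add]
      · rw [hFP k _ (hb0 a ha) _ (hball a b ha hb) (by simp [hxP i1 k hk]),
          hFP k _ hw0N _ (hb1 b hb) (by simp [hxP i1 k hk]), hF0, add_zero])
  set m : Fin n → ℝ := fun i => g * B n (u i) p / B n (v i) (ψ p) with hm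
  have hmain : ∀ i, ∀ᶠ w in 𝓝 w0, F (P i) w = m i * B n (w - w0) (P i) := by
    intro i
    have hcτ : Continuous fun w : Fin n → ℝ => B n (w - w0) (P i) * B n (u i) p :=
      (continuous_B (by fun_prop) continuous_const).mul continuous_const
    have hτ : Tendsto (fun w : Fin n → ℝ => B n (w - w0) (P i) * B n (u i) p) (𝓝 w0) (𝓝 0) := by
      simpa using hcτ.tendsto w0
    have hδ' : ∀ᶠ t : ℝ in 𝓝 0, |t| ≤ δ := by
      filter_upwards [Metric.ball_mem_nhds (0 : ℝ) hδ] with t ht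
      simpa using (mem_ball_zero_iff.1 ht).le
    filter_upwards [hNn, hτ.eventually (hNx i), hτ.eventually hδ'] with w h1 h2 h3
    set t := B n (w - w0) (P i) * B n (u i) p with ht
    have hci := hc i
    have hdi := hd i
    have e1 : F (P i) w = F (P i) (w0 + t • x i) := by
      refine hFP i _ h2 _ h1 ?_
      simp only [map_add, map_smul, LinearMap.add_apply, LinearMap.smul_apply, smul_eq_mul, hxPi,
        ht, map_sub, LinearMap.sub_apply]
      field_simp
      ring
    have e2 : F p (w0 + t • x i) = B n (v i) (ψ p) * F (P i) (w0 + t • x i) := by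
      rw [hFsum]
      refine Finset.sum_eq_single i (fun k _ hk => ?_) (by simp)
      rw [hFP k _ hw0N _ h2 (by simp [hxP i k hk]), hF0, mul_zero]
    have e3 : F p (w0 + t • x i) = g * t := by
      rw [← hg t h3]
      exact hFp _ (hb0 t h3) _ h2 (by simp [hxp])
    rw [e1, hm]
    rw [e3] at e2
    field_simp
    rw [mul_comm, ← e2, ht]; ring
  set A : (Fin n → ℝ) →ₗ[ℝ] (Fin n → ℝ) :=
    ∑ i, LinearMap.smulRight (m i • (B n).flip (P i)) (v i) with hA
  have hAψ : ∀ y k, B n (A y) (ψ (P k)) = m k * B n y (P k) := by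
    intro y k
    simp [hA, LinearMap.sum_apply, hvP]
  refine ⟨A, z n φ w0 - A w0, ?_, ?_⟩
  · by_cases hg0 : g = 0
    · left
      rw [hA]
      simp [hm, hg0]
    · right
      have hinj : Function.Injective A := by
        rw [← LinearMap.ker_eq_bot, LinearMap.ker_eq_bot']
        intro y hy
        refine eq_zero_of_basis bP fun k => ?_
        have := hAψ y k
        rw [hy, hm] at this
        simpa [hg0, hc k, hd k, hbP'] using this.symm
      exact ⟨hinj, LinearMap.injective_iff_surjective.1 hinj⟩
  · filter_upwards [eventually_all.2 hmain] with w h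
    have : z n φ w - z n φ w0 - A (w - w0) = 0 := by
      refine eq_zero_of_basis bψ fun k => ?_
      rw [hbψ', map_sub, LinearMap.sub_apply, hAψ, ← h k]
      exact sub_self _
    rw [map_sub] at this
    rw [← sub_eq_zero, ← this]; abel

end Pres

/-! ### Globalizing the affine description -/

/-- The set on which the inverted map is given by `w ↦ A w + b`. -/
def R (n : ℕ) (φ : (Fin n → ℝ) → (Fin n → ℝ)) (A : (Fin n → ℝ) →ₗ[ℝ] (Fin n → ℝ))
    (b : Fin n → ℝ) : Set (Fin n → ℝ) :=
  {w | w ∈ Om n φ ∧ z n φ w = A w + b}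

lemma eq_of_closure {X Y : Type*} [TopologicalSpace X] [TopologicalSpace Y] [T2Space Y]
    {f g : X → Y} {S : Set X} {w : X} (hf : ContinuousAt f w) (hg : ContinuousAt g w)
    (h : ∀ y ∈ S, f y = g y) (hw : w ∈ closure S) : f w = g w := by
  have := mem_closure_iff_nhdsWithin_neBot.1 hw
  exact tendsto_nhds_unique_of_eventuallyEq (hf.mono_left nhdsWithin_le_nhds)
    (hg.mono_left nhdsWithin_le_nhds) (eventually_mem_nhdsWithin.mono fun y hy => h y hy)

lemma tendsto_line (v y : Fin n → ℝ) : Tendsto (fun t : ℝ => v + t • y) (𝓝 0) (𝓝 v) := by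
  have : Continuous fun t : ℝ => v + t • y := by fun_prop
  simpa using this.tendsto 0

lemma exists_pos_of_nhds {P : ℝ → Prop} (h : ∀ᶠ t in 𝓝 (0 : ℝ), P t) :
    ∃ t > 0, P t ∧ P (-t) := by
  have h2 : ∀ᶠ t in 𝓝 (0 : ℝ), P (-t) := by
    have : Tendsto (fun t : ℝ => -t) (𝓝 0) (𝓝 0) := by simpa using (continuous_neg.tendsto (0 : ℝ))
    exact this.eventually h
  obtain ⟨t, ht, ht'⟩ := (((h.and h2).filter_mono nhdsWithin_le_nhds).and
    (eventually_mem_nhdsWithin (s := Ioi (0 : ℝ)) (a := 0))).exists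
  exact ⟨t, ht', ht⟩

/-- Affine maps agreeing near a point are equal. -/
lemma affine_unique {A A' : (Fin n → ℝ) →ₗ[ℝ] (Fin n → ℝ)} {b b' v : Fin n → ℝ}
    (h : ∀ᶠ w in 𝓝 v, A w + b = A' w + b') : A = A' ∧ b = b' := by
  have hA : A = A' := by
    refine LinearMap.ext fun y => ?_
    obtain ⟨t, ht, h1, -⟩ := exists_pos_of_nhds ((tendsto_line v y).eventually h)
    have h2 := h.self_of_nhds
    simp only [map_add, map_smul] at h1
    refine smul_right_injective _ ht.ne' (?_ : t • A y = t • A' y)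
    have h3 : t • A y - t • A' y = (A v + t • A y + b) - (A' v + t • A' y + b')
      - ((A v + b) - (A' v + b')) := by abel
    rw [h1, h2, sub_self, sub_self, sub_self] at h3
    exact sub_eq_zero.1 h3
  refine ⟨hA, ?_⟩
  have h2 := h.self_of_nhds
  rw [hA] at h2
  exact add_left_cancel h2

namespace Pres

variable {φ ψ : (Fin n → ℝ) → (Fin n → ℝ)}

/-- `R n φ A b` is relatively closed in the set `q ≠ 0`. -/
lemma closure_R (H : Pres n φ ψ) {A : (Fin n → ℝ) →ₗ[ℝ] (Fin n → ℝ)} {b w : Fin n → ℝ}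
    (hw : w ∈ closure (R n φ A b)) (hq : B n w w ≠ 0) : w ∈ R n φ A b := by
  have hA : Continuous fun w => A w + b := by
    have := A.continuous_of_finiteDimensional; fun_prop
  have hφ : ContinuousAt (fun w => φ (iv n w)) w :=
    ContinuousAt.comp (g := φ) H.cont.continuousAt (continuousAt_iv hq)
  have hqφ : ContinuousAt (fun w => B n (φ (iv n w)) (φ (iv n w))) w :=
    ContinuousAt.comp (g := fun y => B n y y) (f := fun w => φ (iv n w))
      (continuous_B continuous_id continuous_id).continuousAt hφ
  have hqA : ContinuousAt (fun w => B n (A w + b) (A w + b)) w :=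
    (continuous_B hA hA).continuousAt
  -- The relation `A w + b = iv (φ (iv w))` rewritten as closed conditions.
  have h1 : B n (φ (iv n w)) (φ (iv n w)) * B n (A w + b) (A w + b) = 4 := by
    refine eq_of_closure (hqφ.mul hqA) continuousAt_const (fun y hy => ?_) hw
    have hy2 := hy.1.2
    change B n (φ (iv n y)) (φ (iv n y)) * B n (A y + b) (A y + b) = 4
    rw [← hy.2, z, q_iv hy2]
    field_simp
  have h2 : B n (A w + b) (A w + b) • φ (iv n w) = (2 : ℝ) • (A w + b) := by
    refine eq_of_closure (hqA.smul hφ) (hA.continuousAt.const_smul (2 : ℝ)) (fun y hy => ?_) hw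
    have hy2 := hy.1.2
    change B n (A y + b) (A y + b) • φ (iv n y) = (2 : ℝ) • (A y + b)
    rw [← hy.2, z, q_iv hy2, iv.eq_1 n (φ (iv n y)), smul_smul]
    congr 1
    ring
  have hne : B n (φ (iv n w)) (φ (iv n w)) ≠ 0 := by
    intro h; rw [h, zero_mul] at h1; norm_num at h1
  refine ⟨⟨hq, hne⟩, ?_⟩
  rw [z, iv]
  refine smul_right_injective _ (two_ne_zero (α := ℝ)) ?_
  change (2 : ℝ) • _ = (2 : ℝ) • (A w + b)
  rw [← h2, smul_smul]
  congr 1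
  field_simp
  linarith

lemma mem_interior_R (H : Pres n φ ψ) {w : Fin n → ℝ} (hw : w ∈ Om n φ) :
    ∃ (A : (Fin n → ℝ) →ₗ[ℝ] (Fin n → ℝ)) (b : Fin n → ℝ), (A = 0 ∨ Function.Bijective A) ∧
      w ∈ interior (R n φ A b) := by
  obtain ⟨A, b, h1, h2⟩ := H.affine hw
  exact ⟨A, b, h1, mem_interior_iff_mem_nhds.2 ((H.Om_nhds hw).and h2)⟩

/-- The affine description of `z` persists along the ray through `w0`: on it, the interior of
`R n φ A b` is relatively closed, since two affine descriptions meeting in an open set agree. -/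
lemma ray (H : Pres n φ ψ) {A : (Fin n → ℝ) →ₗ[ℝ] (Fin n → ℝ)} {b w0 : Fin n → ℝ}
    (hw : w0 ∈ interior (R n φ A b)) {t : ℝ} (ht : 0 < t) : t • w0 ∈ interior (R n φ A b) := by
  have hpre : IsPreconnected ((fun t : ℝ => t • w0) '' Ioi 0) :=
    isPreconnected_Ioi.image _ (by fun_prop)
  refine hpre.subset_of_closure_inter_subset isOpen_interior
    ⟨w0, ⟨1, mem_Ioi.2 one_pos, one_smul _ _⟩, hw⟩ ?_ ⟨t, ht, rfl⟩
  rintro _ ⟨hcl, s, hs, rfl⟩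
  have hs' : (0 : ℝ) < s := hs
  have hq0 := (interior_subset hw).1.1
  have hmem : s • w0 ∈ R n φ A b := by
    refine H.closure_R (closure_mono interior_subset hcl) ?_
    simp only [map_smul, LinearMap.smul_apply, smul_eq_mul]
    exact mul_ne_zero hs'.ne' (mul_ne_zero hs'.ne' hq0)
  obtain ⟨A', b', -, hmemI⟩ := H.mem_interior_R hmem.1
  obtain ⟨v, hv1, hv2⟩ := mem_closure_iff_nhds.1 hcl _ (isOpen_interior.mem_nhds hmemI)
  have := affine_unique (A := A) (A' := A') (b := b) (b' := b') (v := v) (by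
    filter_upwards [mem_interior_iff_mem_nhds.1 hv1, mem_interior_iff_mem_nhds.1 hv2]
      with y h1 h2
    rw [← h1.2, ← h2.2])
  rw [this.1, this.2]
  exact hmemI

/-- The linear part does not vanish: otherwise `φ` would be constant on the ray through `iv w`,
hence zero there by continuity at `0`. -/
lemma mem_interior_bij (H : Pres n φ ψ) {w : Fin n → ℝ} (hw : w ∈ Om n φ) :
    ∃ (A : (Fin n → ℝ) →ₗ[ℝ] (Fin n → ℝ)) (c : Fin n → ℝ), Function.Bijective A ∧
      w ∈ interior (R n φ A (A c)) := by
  obtain ⟨A, b, rfl | h1, h2⟩ := H.mem_interior_R hw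
  · exfalso
    have h3 : ∀ t : ℝ, 0 < t → φ (t • iv n w) = iv n b := by
      intro t ht
      have h4 := interior_subset (H.ray h2 (inv_pos.2 ht))
      have h5 : z n φ (t⁻¹ • w) = b := by simpa using h4.2
      rw [z] at h5
      have h6 := h4.1.2
      rw [iv_smul (inv_pos.2 ht).ne', inv_inv] at h5 h6
      rw [← h5, iv_iv h6]
    have hc : ContinuousAt (fun t : ℝ => φ (t • iv n w)) 0 := by
      have := H.cont; fun_prop
    have h4 : φ ((0 : ℝ) • iv n w) = iv n b :=
      eq_of_closure (S := Ioi (0 : ℝ)) hc continuousAt_const h3 (by simp)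
    rw [zero_smul, H.zero] at h4
    have h5 := h3 1 one_pos
    rw [one_smul, ← h4] at h5
    exact hw.2 (by rw [h5]; simp)
  · obtain ⟨c, rfl⟩ := h1.2 b
    exact ⟨A, c, h1, h2⟩

lemma null_A (H : Pres n φ ψ) {A : (Fin n → ℝ) →ₗ[ℝ] (Fin n → ℝ)} {b w0 : Fin n → ℝ}
    (hw : w0 ∈ interior (R n φ A b)) {v : Fin n → ℝ} (hv : B n v v = 0) :
    B n (A v) (A v) = 0 := by
  obtain ⟨t, ht, h1, -⟩ := exists_pos_of_nhds
    ((tendsto_line w0 v).eventually (mem_interior_iff_mem_nhds.1 hw))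
  have h2 := interior_subset hw
  have h3 := H.null h1.1 h2.1 (by simp [hv])
  rw [h1.2, h2.2] at h3
  simpa [ht.ne'] using h3

/-- The linear part is adjoint to `ψ` up to a factor, and determines `φ` on a half line. -/
lemma adj (H : Pres n φ ψ)
    {A : (Fin n → ℝ) →ₗ[ℝ] (Fin n → ℝ)} {c w0 p : Fin n → ℝ} (hA : Function.Bijective A)
    (hw : w0 ∈ interior (R n φ A (A c))) (hp : p ∈ QSet n) (h0 : B n w0 p ≠ 0) :
    ∃ α : ℝ, α ≠ 0 ∧ (∀ v, B n (A v) (ψ p) = α * B n v p) ∧ ∀ s : ℝ, 0 < s * B n w0 p →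
      ∃ h : ℝ, φ (s⁻¹ • p) = h • ψ p ∧ h * (α * (s + B n c p)) = 1 := by
  have hperp : ∀ v, B n v p = 0 → B n (A v) (ψ p) = 0 := by
    intro v hv
    obtain ⟨t, ht, h1, -⟩ := exists_pos_of_nhds
      ((tendsto_line w0 v).eventually (mem_interior_iff_mem_nhds.1 hw))
    have h2 := interior_subset hw
    have h3 := H.rel_eq h2.1 h1.1 hp h0 (by simp [hv])
    rw [h1.2, h2.2] at h3
    simpa [ht.ne'] using h3
  have hep : B n (e0 H.hn) p = 1 := by rw [B_comm, B_e0, ((mem_Q H.hn).1 hp).1]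
  have hα : ∀ v, B n (A v) (ψ p) = B n (A (e0 H.hn)) (ψ p) * B n v p := by
    intro v
    have := hperp (v - B n v p • e0 H.hn) (by simp [hep])
    simp only [map_sub, map_smul, LinearMap.sub_apply, LinearMap.smul_apply, smul_eq_mul] at this
    linarith
  refine ⟨_, ?_, hα, ?_⟩
  · intro h
    refine ne_zero_of_Q H.hn (H.psi p hp) (B_nondeg fun y => ?_)
    obtain ⟨v, rfl⟩ := hA.2 y
    rw [B_comm, hα, h, zero_mul]
  · intro s hs
    have hτ : 0 < s / B n w0 p := by
      rcases mul_pos_iff.1 hs with ⟨h1, h2⟩ | ⟨h1, h2⟩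
      · exact div_pos h1 h2
      · exact div_pos_of_neg_of_neg h1 h2
    have h1 := interior_subset (H.ray hw hτ)
    have h2 : B n ((s / B n w0 p) • w0) p = s := by simp [h0]
    obtain ⟨h, h3, h4⟩ := H.rel h1.1 hp (by
      rw [h2]; rintro rfl; simp at hs)
    rw [h2] at h3
    rw [h1.2, ← map_add, hα, map_add, LinearMap.add_apply, h2] at h4
    exact ⟨h, h3, h4⟩

/-- A negative product would make `s = -B c p` an admissible parameter in `adj`, for which
`s + B c p` vanishes. -/
lemma shift_nonneg (H : Pres n φ ψ) {A : (Fin n → ℝ) →ₗ[ℝ] (Fin n → ℝ)} {c w0 p : Fin n → ℝ}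
    (hA : Function.Bijective A) (hw : w0 ∈ interior (R n φ A (A c))) (hp : p ∈ QSet n) :
    0 ≤ B n c p * B n w0 p := by
  by_contra! h
  obtain ⟨α, -, -, hs⟩ := H.adj hA hw hp (by rintro h0; simp [h0] at h)
  obtain ⟨k, -, h2⟩ := hs (-B n c p) (by linarith)
  simp at h2

/-- Null lines `ℝ r` with `r` near `p` on which `φ` is known near the null cone of `x` determine
`φ x` up to the scalar `q (φ x)`. -/
lemma value (H : Pres n φ ψ) {A : (Fin n → ℝ) →ₗ[ℝ] (Fin n → ℝ)} {c w0 x p : Fin n → ℝ}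
    (hA : Function.Bijective A) (hw : w0 ∈ interior (R n φ A (A c))) (hp : p ∈ QSet n)
    (hx : B n x x ≠ 0) (h : 0 < B n (iv n x) p * B n w0 p) :
    B n (φ x) (φ x) • A (iv n x + c) = (2 : ℝ) • φ x := by
  obtain ⟨d, hd⟩ := hA.2 (B n (φ x) (φ x) • A (iv n x + c) - (2 : ℝ) • φ x)
  suffices d = 0 by rw [this, map_zero] at hd; exact sub_eq_zero.1 hd.symm
  refine Q_open H.hn hp ?_
  have hc : Continuous fun r => B n (iv n x) r * B n w0 r :=
    (continuous_B continuous_const continuous_id).mul (continuous_B continuous_const continuous_id)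
  filter_upwards [hc.continuousAt.eventually_const_lt h] with r hr hrQ
  have hw0 : B n w0 r ≠ 0 := by rintro h0; simp [h0] at hr
  have hs0 : B n (iv n x) r ≠ 0 := by rintro h0; simp [h0] at hr
  obtain ⟨α, hα0, hα, hs⟩ := H.adj hA hw hrQ hw0
  obtain ⟨k, hk1, hk2⟩ := hs _ hr
  obtain ⟨k', hk1', hk2'⟩ := H.cone (x := x) (t := (B n (iv n x) r)⁻¹) hrQ (by
    rw [B_iv] at hs0 ⊢
    have : B n x r ≠ 0 := by intro h0; simp [h0] at hs0
    field_simp)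
  rw [hk1] at hk1'
  have hkk : k = k' := smul_left_injective ℝ (ne_zero_of_Q H.hn (H.psi r hrQ)) hk1'
  subst hkk
  have h1 := hα d
  rw [hd, map_sub, LinearMap.sub_apply, map_smul, map_smul, LinearMap.smul_apply,
    LinearMap.smul_apply, hα, smul_eq_mul, smul_eq_mul, map_add, LinearMap.add_apply, hk2'] at h1
  have h2 : α * B n d r = 0 := by
    rw [← h1]
    linear_combination (2 * B n (φ x) (ψ r)) * hk2
  exact (mul_eq_zero.1 h2).resolve_left hα0

lemma exists_Om (H : Pres n φ ψ) : ∃ w, w ∈ Om n φ := by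
  have hnd := H.nd
  push Not at hnd
  obtain ⟨x, hx⟩ := hnd 0
  rw [sub_zero] at hx
  have ho : IsOpen {x | B n (φ x) (φ x) ≠ 0} :=
    isOpen_ne_fun (continuous_B H.cont H.cont) continuous_const
  obtain ⟨y, hy1, hy2⟩ := (dense_q H.hn).exists_mem_open ho ⟨x, hx⟩
  have hy1' : B n y y ≠ 0 := hy1
  have hy2' : B n (φ y) (φ y) ≠ 0 := hy2
  exact ⟨iv n y, q_iv_ne hy1', by rwa [iv_iv hy1']⟩

lemma exists_spacelike (H : Pres n φ ψ) : ∃ w, w ∈ Om n φ ∧ B n w w < 0 := by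
  obtain ⟨w0, hw0⟩ := H.exists_Om
  rcases lt_or_gt_of_ne hw0.1 with hneg | hpos
  · exact ⟨w0, hw0, hneg⟩
  obtain ⟨x, hx, hφx⟩ : ∃ x, B n x x < 0 ∧ φ x ≠ 0 := by
    by_contra! h
    obtain ⟨p, hp, p', hp', hne⟩ : ∃ p ∈ QSet n, ∃ p' ∈ QSet n, p ≠ p' := by
      obtain ⟨a, b, -, ha, hb, -, hab, -⟩ := exists_three H.hn
      exact ⟨a, ha, b, hb, hab⟩
    obtain ⟨t, ht⟩ := H.exists_ne hp
    have ht0 : t ≠ 0 := by rintro rfl; exact ht (by rw [zero_smul, H.zero])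
    have hpp := B_Q_pos H.hn hp hp' hne
    have hc : ContinuousAt (fun s : ℝ => φ (t • p + s • (-t • p'))) 0 := by
      have := H.cont; fun_prop
    have := eq_of_closure (S := Ioi (0 : ℝ)) (g := fun _ => (0 : Fin n → ℝ)) hc continuousAt_const
      (fun s hs => h _ (by
        have hs' : (0 : ℝ) < s := hs
        simp only [map_add, map_smul, LinearMap.add_apply, LinearMap.smul_apply, smul_eq_mul,
          ((mem_Q H.hn).1 hp).2, ((mem_Q H.hn).1 hp').2, B_comm p' p]
        have := mul_pos (mul_pos hs' (pow_pos (abs_pos.2 ht0) 2)) hpp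
        rw [sq_abs] at this
        nlinarith)) (by simp)
    rw [zero_smul, add_zero] at this
    exact ht this
  have hqi : B n (iv n x) (iv n x) < 0 := by
    rw [q_iv hx.ne]; exact div_neg_of_pos_of_neg (by norm_num) hx
  obtain ⟨A, c, hA, hw⟩ := H.mem_interior_bij hw0
  obtain ⟨p, hp, hpp⟩ : ∃ p ∈ QSet n, 0 < B n (iv n x) p * B n w0 p := by
    obtain ⟨⟨p, hp, h1⟩, ⟨p', hp', h2⟩⟩ := exists_Q_pos_neg H.hn hqi
    have h3 := timelike_sign H.hn hpos hp
    have h4 := timelike_sign H.hn hpos hp'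
    rcases lt_trichotomy (w0 (lst H.hn)) 0 with h | h | h
    · exact ⟨p, hp, mul_pos_of_neg_of_neg h1 (neg_of_mul_pos_right h3 h.le)⟩
    · rw [h, zero_mul] at h3; exact absurd h3 (lt_irrefl _)
    · exact ⟨p', hp', mul_pos h2 (pos_of_mul_pos_right h4 h.le)⟩
  have h1 := H.value hA hw hp hx.ne hpp
  refine ⟨iv n x, ⟨hqi.ne, ?_⟩, hqi⟩
  rw [iv_iv hx.ne]
  intro h2
  rw [h2, zero_smul] at h1
  exact hφx ((smul_eq_zero.1 h1.symm).resolve_left two_ne_zero)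

/-- Up to a scalar factor, the preserver is an injective linear map. -/
lemma eq_linear (H : Pres n φ ψ)
    : ∃ (A : (Fin n → ℝ) →ₗ[ℝ] (Fin n → ℝ)) (l : ℝ), Function.Injective A ∧
    ∀ x, l • φ x = A x := by
  obtain ⟨w0, hw0, hneg⟩ := H.exists_spacelike
  obtain ⟨A, c, hA, hw⟩ := H.mem_interior_bij hw0
  obtain ⟨p0, hp0, hperp⟩ := exists_Q_perp H.hn hneg
  have hep : B n (e0 H.hn) p0 = 1 := by rw [B_comm, B_e0, ((mem_Q H.hn).1 hp0).1]
  obtain ⟨d, hd, hd1, hd2⟩ := exists_pos_of_nhds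
    ((tendsto_line w0 (e0 H.hn)).eventually (isOpen_interior.mem_nhds hw))
  set wp := w0 + d • e0 H.hn
  set wm := w0 + (-d) • e0 H.hn
  have hwp : B n wp p0 = d := by simp [wp, hperp, hep]
  have hwm : B n wm p0 = -d := by simp [wm, hperp, hep]
  have hc0 : c = 0 := by
    by_contra hc
    have e1 : ∀ᶠ r in 𝓝 p0, 0 < B n wp r :=
      (continuous_B continuous_const continuous_id).continuousAt.eventually_const_lt
        (by simpa [hwp] using hd)
    have e2 : ∀ᶠ r in 𝓝 p0, B n wm r < 0 :=
      (continuous_B continuous_const continuous_id).continuousAt.eventually_lt_const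
        (by simpa [hwm] using hd)
    obtain ⟨r, hr, ⟨hr1, hr2⟩, hr3⟩ := Q_dense H.hn (ι := Unit) Finset.univ (fun _ => c)
      (fun _ _ => hc) hp0 (e1.and e2)
    have hcr := hr3 () (Finset.mem_univ _)
    have h1 := H.shift_nonneg hA hd1 hr
    have h2 := H.shift_nonneg hA hd2 hr
    have h1' := nonneg_of_mul_nonneg_left h1 hr1
    have h2' : B n c r ≤ 0 := by
      by_contra! h
      exact absurd h2 (not_le.2 (mul_neg_of_pos_of_neg h hr2))
    exact hcr (le_antisymm h2' h1')
  subst hc0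
  obtain ⟨l, hl⟩ := similarity H.hn A fun v hv => H.null_A hw hv
  have hor : ∀ x, B n x x ≠ 0 → B n x p0 ≠ 0 → φ x = 0 ∨ l • φ x = A x := by
    intro x hx hxp
    have hyp : B n (iv n x) p0 ≠ 0 := by
      rw [B_iv]; exact mul_ne_zero (div_ne_zero two_ne_zero hx) hxp
    have hval : B n (φ x) (φ x) • A (iv n x) = (2 : ℝ) • φ x := by
      rcases lt_or_gt_of_ne hyp with h | h
      · simpa using H.value hA hd2 hp0 hx (by rw [hwm]; nlinarith)
      · simpa using H.value hA hd1 hp0 hx (by rw [hwp]; positivity)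
    obtain ⟨k, hk⟩ : ∃ k : ℝ, φ x = k • A x := by
      refine ⟨B n (φ x) (φ x) / B n x x, ?_⟩
      refine smul_right_injective _ (two_ne_zero (α := ℝ)) ?_
      change (2 : ℝ) • φ x = (2 : ℝ) • ((B n (φ x) (φ x) / B n x x) • A x)
      rw [← hval, iv, map_smul, smul_smul, smul_smul]
      congr 1
      ring
    have h3 : B n (φ x) (φ x) = k * (k * (l * B n x x)) := by
      conv_lhs => rw [hk]
      simp [hl]
    rw [h3, iv, map_smul, smul_smul, hk, smul_smul] at hval
    have hAx : A x ≠ 0 := by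
      intro h
      have : x = 0 := hA.1 (by rw [h, map_zero])
      exact hx (by rw [this]; simp)
    have h4 := smul_left_injective ℝ hAx hval
    have h5 : k * (k * l - 1) = 0 := by
      field_simp at h4
      linear_combination h4
    rcases mul_eq_zero.1 h5 with h | h
    · left; rw [hk, h, zero_smul]
    · right
      rw [hk, smul_smul, mul_comm, sub_eq_zero.1 h, one_smul]
  have hAc := A.continuous_of_finiteDimensional
  have hφc := H.cont
  have hC1 : IsClosed {x | φ x = 0} := isClosed_eq hφc continuous_const
  have hC2 : IsClosed {x | l • φ x = A x} := isClosed_eq (by fun_prop) hAc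
  have hall : ∀ x, φ x = 0 ∨ l • φ x = A x := by
    intro x
    have hdense := (dense_q H.hn).inter_of_isOpen_left (dense_p H.hn hp0)
      (isOpen_ne_fun (continuous_B continuous_id continuous_id) continuous_const)
    exact (hC1.union hC2).closure_subset_iff.2 (fun y hy => hor y hy.1 hy.2) (hdense x)
  refine ⟨A, l, hA.1, ?_⟩
  have hrank : 1 < Module.rank ℝ (Fin n → ℝ) := by
    rw [rank_fin_fun]
    exact_mod_cast (show 1 < n by have := H.hn; omega)
  have hpre := (isConnected_compl_singleton_of_one_lt_rank hrank (0 : Fin n → ℝ)).isPreconnected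
  have hdis := isPreconnected_closed_iff.1 hpre _ _ hC1 hC2 (fun x _ => hall x)
  by_cases hne : (({0}ᶜ : Set (Fin n → ℝ)) ∩ {x | l • φ x = A x}).Nonempty
  · intro x
    by_contra hx
    have hx0 : x ≠ 0 := by rintro rfl; exact hx (by simp [H.zero])
    obtain ⟨y, hy0, hy1, hy2⟩ := hdis ⟨x, hx0, (hall x).resolve_right hx⟩ hne
    have hy1' : φ y = 0 := hy1
    have hy2' : l • φ y = A y := hy2
    rw [hy1', smul_zero] at hy2'
    exact hy0 (hA.1 (by rw [← hy2', map_zero]))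
  · exfalso
    refine H.nd ⟨0, fun x => ?_⟩
    have : φ x = 0 := by
      by_cases hx0 : x = 0
      · rw [hx0, H.zero]
      · exact (hall x).resolve_right fun h => hne ⟨x, hx0, h⟩
    simp [this]

end Pres

end Mink

theorem generic_nondegenerate_preserver_preserves_adjacency
    (n : ℕ) (hn : 4 ≤ n) (φ : (Fin n → ℝ) → (Fin n → ℝ))
    (hcont : Continuous φ)
    (hpres : ∀ a b : Fin n → ℝ, mq n (b - a) = 0 → mq n (φ b - φ a) = 0)
    (hnd : ¬ ∃ s' : Fin n → ℝ, ∀ x : Fin n → ℝ, mq n (φ x - s') = 0)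
    (h0 : φ 0 = 0)
    (hnc : ∃ ψ : (Fin n → ℝ) → (Fin n → ℝ), IsInducedMap n φ 0 ψ ∧
       ∃ p ∈ QSet n, ∃ p' ∈ QSet n, ψ p ≠ ψ p')
    (hgen : interior (φ ⁻¹' {0}) = ∅) :
    ∀ a b : Fin n → ℝ, mq n (a - b) = 0 → a ≠ b →
      mq n (φ a - φ b) = 0 ∧ φ a ≠ φ b := by
  obtain ⟨ψ, hψ, hne⟩ := hnc
  have H : Mink.Pres n φ ψ :=
    { hn := hn
      cont := hcont
      pres := fun a b h => by
        have := hpres a b (by rwa [Mink.mq_eq])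
        rwa [Mink.mq_eq] at this
      nd := fun ⟨s, hs⟩ => hnd ⟨s, fun x => by rw [Mink.mq_eq]; exact hs x⟩
      zero := h0
      psi := fun p hp => (hψ p hp).1
      line := fun p hp t => by
        obtain ⟨s, hs⟩ := (hψ p hp).2 t
        exact ⟨s, by simpa [h0] using hs⟩
      nonconst := hne }
  obtain ⟨A, l, hA, hφ⟩ := H.eq_linear
  intro a b hab hne
  refine ⟨hpres b a hab, fun h => hne (hA ?_)⟩
  rw [← hφ a, ← hφ b, h]
end

section
/- Let n ≥ 4 and let φ : ℝⁿ → ℝⁿ be a continuous, non-degenerate coherency preserver for the form q(x₁,…,xₙ) = xₙ² − (x₁² + ⋯ + x_{n−1}²). Assume φ(0) = 0, the induced map φ_0 : 𝒬 → 𝒬 is nonconstant, and 0 is generic (the preimage φ⁻¹({0}) has empty interior). Then φ maps 𝒞(0) \ {0} into itself: for every a ∈ ℝⁿ with q(a) = 0 and a ≠ 0, one has q(φ(a)) = 0 and φ(a) ≠ 0. -/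
/-! ### The polar form -/

/-- The symmetric bilinear form with `mB n x x = mq n x`. -/
noncomputable def mB (n : ℕ) (x y : Fin n → ℝ) : ℝ :=
  ∑ i : Fin n, (if (i : ℕ) = n - 1 then (1 : ℝ) else -1) * (x i * y i)

section PolarForm

variable {n : ℕ}

lemma mq_eq (x : Fin n → ℝ) : mq n x = mB n x x := by
  simp only [mq, mB, pow_two]

lemma mB_comm (x y : Fin n → ℝ) : mB n x y = mB n y x := by
  simp only [mB, mul_comm (x _)]

lemma mB_add_left (x y z : Fin n → ℝ) : mB n (x + y) z = mB n x z + mB n y z := by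
  simp only [mB, ← Finset.sum_add_distrib, Pi.add_apply]
  exact Finset.sum_congr rfl fun i _ => by ring

lemma mB_smul_left (c : ℝ) (x z : Fin n → ℝ) : mB n (c • x) z = c * mB n x z := by
  simp only [mB, Finset.mul_sum, Pi.smul_apply, smul_eq_mul]
  exact Finset.sum_congr rfl fun i _ => by ring

lemma mB_sub_left (x y z : Fin n → ℝ) : mB n (x - y) z = mB n x z - mB n y z := by
  simp only [mB, ← Finset.sum_sub_distrib, Pi.sub_apply]
  exact Finset.sum_congr rfl fun i _ => by ring

lemma mB_add_right (x y z : Fin n → ℝ) : mB n z (x + y) = mB n z x + mB n z y := by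
  rw [mB_comm, mB_add_left, mB_comm x, mB_comm y]

lemma mB_smul_right (c : ℝ) (x z : Fin n → ℝ) : mB n z (c • x) = c * mB n z x := by
  rw [mB_comm, mB_smul_left, mB_comm x]

lemma mB_sub_right (x y z : Fin n → ℝ) : mB n z (x - y) = mB n z x - mB n z y := by
  rw [mB_comm, mB_sub_left, mB_comm x, mB_comm y]

lemma continuous_mB {X : Type*} [TopologicalSpace X] {f g : X → Fin n → ℝ}
    (hf : Continuous f) (hg : Continuous g) : Continuous fun x => mB n (f x) (g x) := by
  unfold mB
  fun_prop

/-- A null vector whose last (time) coordinate vanishes is zero. -/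
lemma eq_zero_of_last_eq_zero {h : Fin n → ℝ} (hq : mq n h = 0)
    (ht : ∀ i : Fin n, (i : ℕ) = n - 1 → h i = 0) : h = 0 := by
  have h1 : ∑ i : Fin n, h i ^ 2 = 0 := by
    have h2 : mq n h = -∑ i : Fin n, h i ^ 2 := by
      rw [mq, ← Finset.sum_neg_distrib]
      refine Finset.sum_congr rfl fun i _ => ?_
      split_ifs with hi
      · simp [ht i hi]
      · ring
    linarith
  ext i
  have := (Finset.sum_eq_zero_iff_of_nonneg (fun i _ => sq_nonneg (h i))).1 h1 i (Finset.mem_univ i)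
  simpa using this

/-- Orthogonal null vectors are proportional. -/
lemma exists_smul_of_orthogonal (hn : 4 ≤ n) {m k : Fin n → ℝ} (hm : mq n m = 0)
    (hk : mq n k = 0) (hmk : mB n m k = 0) (h0 : m ≠ 0) : ∃ c : ℝ, k = c • m := by
  let t : Fin n := ⟨n - 1, by omega⟩
  have ht : ∀ i : Fin n, (i : ℕ) = n - 1 → i = t := fun i hi => Fin.ext hi
  have hmt : m t ≠ 0 := fun h => h0 (eq_zero_of_last_eq_zero hm fun i hi => by rw [ht i hi, h])
  refine ⟨k t / m t, ?_⟩
  rw [← sub_eq_zero]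
  refine eq_zero_of_last_eq_zero ?_ fun i hi => ?_
  · rw [mq_eq] at *
    simp only [mB_sub_left, mB_sub_right, mB_smul_left, mB_smul_right, mB_comm k m]
    rw [hm, hk, hmk]; ring
  · rw [ht i hi]; simp [hmt]

lemma eq_zero_of_orthogonal_pair (hn : 4 ≤ n) {m m' k : Fin n → ℝ} (hm : mq n m = 0)
    (hk : mq n k = 0) (hmm : mB n m m' ≠ 0) (h1 : mB n k m = 0) (h2 : mB n k m' = 0) :
    k = 0 := by
  have h0 : m ≠ 0 := by
    rintro rfl
    exact hmm (by simp [mB])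
  obtain ⟨c, rfl⟩ := exists_smul_of_orthogonal hn hm hk (by rw [mB_comm, h1]) h0
  rw [mB_smul_left] at h2
  rcases mul_eq_zero.1 h2 with h | h
  · simp [h]
  · exact absurd h hmm

lemma mB_eq_zero_of_coherent {x y : Fin n → ℝ} (hx : mq n x = 0) (hy : mq n y = 0)
    (h : mq n (x - y) = 0) : mB n x y = 0 := by
  rw [mq_eq] at *
  simp only [mB_sub_left, mB_sub_right, mB_comm y x] at h
  linarith

/-- If `x₀` is coherent with `c` and not orthogonal to the null direction `e` as seen from `c`,
then every `x` near `x₀` is coherent with a point of `c + ℝ e` near `c`. -/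
lemma eventually_exists_coherent {x₀ c e : Fin n → ℝ} (he : mq n e = 0) (hx : mq n (x₀ - c) = 0)
    (hB : mB n (x₀ - c) e ≠ 0) {P : (Fin n → ℝ) → Prop} (hP : ∀ᶠ y in nhds c, P y) :
    ∀ᶠ x in nhds x₀, ∃ τ : ℝ, P (c + τ • e) ∧ mq n (x - (c + τ • e)) = 0 := by
  have hcB : Continuous fun x : Fin n → ℝ => mB n (x - c) e :=
    continuous_mB (by fun_prop) continuous_const
  have hcq : Continuous fun x : Fin n → ℝ => mq n (x - c) := by
    simp only [mq_eq]
    exact continuous_mB (by fun_prop) (by fun_prop)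
  have hτ : ContinuousAt (fun x => c + (mq n (x - c) / (2 * mB n (x - c) e)) • e) x₀ := by
    have hdiv : ContinuousAt (fun x => mq n (x - c) / (2 * mB n (x - c) e)) x₀ :=
      hcq.continuousAt.div (continuousAt_const.mul hcB.continuousAt) (by simpa using hB)
    fun_prop
  have hlim : c + (mq n (x₀ - c) / (2 * mB n (x₀ - c) e)) • e = c := by simp [hx]
  have h1 := hτ.eventually (p := P) (by simpa only [hlim] using hP)
  filter_upwards [h1, hcB.continuousAt.eventually_ne hB] with x hx1 hx2
  refine ⟨_, hx1, ?_⟩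
  rw [← sub_sub, mq_eq]
  generalize hu : x - c = u at *
  rw [mq_eq] at he
  simp only [mB_sub_left, mB_sub_right, mB_smul_left, mB_smul_right, mB_comm e u, mq_eq, he]
  field_simp
  ring

end PolarForm

/-! ### Coherency preservers fixing the origin -/

section Preserver

variable {n : ℕ} {φ : (Fin n → ℝ) → (Fin n → ℝ)}

/-- A preserver that vanishes on a null line through `0` has all its values in the null cone:
off a hyperplane, every point is coherent with some point of the line. -/
lemma exists_ne_zero_on_line (hcont : Continuous φ)
    (hpres : ∀ a b : Fin n → ℝ, mq n (b - a) = 0 → mq n (φ b - φ a) = 0)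
    (hnd : ¬ ∃ s' : Fin n → ℝ, ∀ x : Fin n → ℝ, mq n (φ x - s') = 0)
    {p e : Fin n → ℝ} (hp : mq n p = 0) (he : mB n e p ≠ 0) : ∃ s : ℝ, φ (s • p) ≠ 0 := by
  by_contra! hall
  have hoff : ∀ x, mB n x p ≠ 0 → mq n (φ x) = 0 := by
    intro x hx
    have h1 : mq n (x - (mq n x / (2 * mB n x p)) • p) = 0 := by
      rw [mq_eq] at *
      simp only [mB_sub_left, mB_sub_right, mB_smul_left, mB_smul_right, mB_comm p x, hp, mq_eq x]
      field_simp
      ring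
    have h2 := hpres _ _ h1
    rwa [hall, sub_zero] at h2
  refine hnd ⟨0, fun x => ?_⟩
  rw [sub_zero]
  by_cases hx : mB n x p = 0
  · have hcq : Continuous fun ε : ℝ => mq n (φ (x + ε • e)) := by
      simp only [mq_eq]
      exact continuous_mB (by fun_prop) (by fun_prop)
    have h1 : Filter.Tendsto (fun ε : ℝ => mq n (φ (x + ε • e))) (nhdsWithin 0 {0}ᶜ)
        (nhds (mq n (φ (x + (0 : ℝ) • e)))) := (hcq.tendsto 0).mono_left nhdsWithin_le_nhds
    have h2 : Filter.Tendsto (fun ε : ℝ => mq n (φ (x + ε • e))) (nhdsWithin 0 {0}ᶜ)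
        (nhds 0) := by
      refine tendsto_const_nhds.congr' ?_
      filter_upwards [self_mem_nhdsWithin] with ε hε
      refine (hoff _ ?_).symm
      rw [mB_add_left, mB_smul_left, hx, zero_add]
      exact mul_ne_zero hε he
    have := tendsto_nhds_unique h1 h2
    simpa using this
  · exact hoff x hx

/-- The configuration that forces `φ` to vanish on an open set. The null vector `w` is orthogonal
to the image of the null line `a + ℝ v` but not to `φ y`; the point `a + r • v` of the line is
coherent with `y`, and the non-vanishing conditions put it in general position with respect to
`y` and `y'`. -/
lemma core (hn : 4 ≤ n) (hcont : Continuous φ)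
    (hpres : ∀ a b : Fin n → ℝ, mq n (b - a) = 0 → mq n (φ b - φ a) = 0)
    (h0 : φ 0 = 0) (hgen : interior (φ ⁻¹' {0}) = ∅)
    {a v y y' w : Fin n → ℝ} {r : ℝ} (hφa : φ a = 0) (hv : mq n v = 0)
    (hy : mq n y = 0) (hy' : mq n y' = 0) (hyy : mB n (φ y) (φ y') ≠ 0)
    (hw : mq n w = 0) (hwy : mB n w (φ y) ≠ 0)
    (hwv : ∀ s : ℝ, mB n (φ (a + s • v)) w = 0)
    (c1 : mq n (a + r • v - y) = 0) (c2 : mq n (a + r • v - y') ≠ 0)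
    (c3 : mB n (a + r • v - y) (y - y') ≠ 0) (c4 : mB n (a + r • v) y ≠ 0)
    (c5 : mB n (a + r • v - y) v ≠ 0) : False := by
  have hnull : ∀ x, mq n x = 0 → mq n (φ x) = 0 := by
    intro x hx
    have := hpres 0 x (by simpa using hx)
    simpa [h0] using this
  have hsm : ∀ (u : Fin n → ℝ) (τ : ℝ), mq n u = 0 → mq n (u + τ • u) = 0 := by
    intro u τ hu
    rw [mq_eq] at *
    simp only [mB_add_left, mB_add_right, mB_smul_left, mB_smul_right, hu]
    ring
  have hline : ∀ s : ℝ, mq n (φ (a + s • v)) = 0 := by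
    intro s
    have := hpres a (a + s • v) (by
      rw [mq_eq] at *
      simp only [add_sub_cancel_left, mB_smul_left, mB_smul_right, hv]
      ring)
    simpa [hφa] using this
  -- coherent null vectors have orthogonal images, so `y` and `y'` are not coherent
  have hByy : mB n y y' ≠ 0 := by
    intro h
    refine hyy (mB_eq_zero_of_coherent (hnull y hy) (hnull y' hy') (hpres _ _ ?_))
    rw [mq_eq] at *
    simp only [mB_sub_left, mB_sub_right, mB_comm y' y, hy, hy', h]
    ring
  -- `φ` vanishes on the line `a + ℝ v` near `z = a + r • v`
  have hzero : ∀ᶠ x in nhds (a + r • v), ∀ s : ℝ, x = a + s • v → φ x = 0 := by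
    have hopen : ∀ᶠ u in nhds y, mB n w (φ u) ≠ 0 :=
      (continuous_mB continuous_const hcont).continuousAt.eventually_ne hwy
    have c4' : mB n (a + r • v - y) y ≠ 0 := by
      rw [mq_eq] at hy
      rwa [mB_sub_left, hy, sub_zero]
    filter_upwards [eventually_exists_coherent hy c1 c4' hopen] with x hx s hs
    obtain ⟨τ, hτ, hcoh⟩ := hx
    have hφx : mq n (φ x) = 0 := by rw [hs]; exact hline s
    refine eq_zero_of_orthogonal_pair hn hw hφx hτ (by rw [hs]; exact hwv s) ?_
    exact mB_eq_zero_of_coherent hφx (hnull _ (hsm y τ hy)) (hpres _ _ hcoh)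
  obtain ⟨z, hz⟩ : ∃ z, z = a + r • v := ⟨_, rfl⟩
  rw [← hz] at c1 c2 c3 c4 c5 hzero
  -- `l` is the parameter at which the line from `y` to `z` meets the null cone of `y'`
  obtain ⟨l, hl⟩ : ∃ l : ℝ, l = mB n y y' / mB n (z - y) (y - y') := ⟨_, rfl⟩
  have hl0 : l ≠ 0 := by rw [hl]; exact div_ne_zero hByy c3
  have hl' : l * mB n (z - y) (y - y') = mB n y y' := by rw [hl]; field_simp
  obtain ⟨d, hd⟩ : ∃ d, d = z - y := ⟨_, rfl⟩
  have hzd : z = y + d := by rw [hd]; abel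
  have hBy := hy
  have hBy' := hy'
  rw [mq_eq] at hBy hBy'
  subst hzd
  simp only [add_sub_cancel_left] at c1 c3 c5 hl'
  have hBd := c1
  rw [mq_eq] at hBd
  have hdy : mB n d y ≠ 0 := by rwa [mB_add_left, hBy, zero_add] at c4
  simp only [mB_sub_right] at hl'
  have hl1 : l ≠ 1 := by
    rintro rfl
    refine c2 ?_
    rw [mq_eq]
    simp only [mB_sub_left, mB_sub_right, mB_add_left, mB_add_right, mB_comm y' y, mB_comm y d,
      mB_comm y' d, hBy, hBy', hBd]
    linear_combination 2 * hl'
  obtain ⟨P, hP, P', hP', hPP⟩ : ∃ P : (Fin n → ℝ) → Prop, (∀ᶠ u in nhds y, P u) ∧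
      ∃ P' : (Fin n → ℝ) → Prop, (∀ᶠ u in nhds y', P' u) ∧
        ∀ {u}, P u → ∀ {u'}, P' u' → mB n (φ u) (φ u') ≠ 0 := by
    have hc : Continuous fun u : (Fin n → ℝ) × (Fin n → ℝ) => mB n (φ u.1) (φ u.2) :=
      continuous_mB (by fun_prop) (by fun_prop)
    have := (hc.continuousAt (x := (y, y'))).eventually_ne hyy
    rw [nhds_prod_eq] at this
    exact Filter.eventually_prod_iff.1 this
  obtain ⟨x₀, hx₀⟩ : ∃ x₀, x₀ = y + l • d := ⟨_, rfl⟩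
  have hy'x : mq n (x₀ - y') = 0 := by
    rw [mq_eq, hx₀]
    simp only [mB_sub_left, mB_sub_right, mB_add_left, mB_add_right, mB_smul_left, mB_smul_right,
      mB_comm y' y, mB_comm y d, mB_comm y' d, hBy, hBy', hBd]
    linear_combination 2 * hl'
  have e1 := eventually_exists_coherent (x₀ := x₀) (c := y) hy
    (by rw [mq_eq, hx₀]
        simp only [add_sub_cancel_left, mB_smul_left, mB_smul_right, hBd]
        ring)
    (by rw [hx₀, add_sub_cancel_left, mB_smul_left]; exact mul_ne_zero hl0 hdy)
    hP
  have hxz : x₀ - (y + d) = (l - 1) • d := by rw [hx₀, sub_smul, one_smul]; abel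
  have e3 := eventually_exists_coherent (x₀ := x₀) (c := y + d) hv
    (by rw [mq_eq, hxz]
        simp only [mB_smul_left, mB_smul_right, hBd]
        ring)
    (by rw [hxz, mB_smul_left]; exact mul_ne_zero (sub_ne_zero.2 hl1) c5) hzero
  have hB2 : mB n (x₀ - y') y' ≠ 0 := by
    have : mB n (x₀ - y') y' = l * mB n d y := by
      rw [hx₀]
      simp only [mB_sub_left, mB_add_left, mB_smul_left, hBy']
      linear_combination -hl'
    rw [this]
    exact mul_ne_zero hl0 hdy
  have e2 := eventually_exists_coherent hy' hy'x hB2 hP'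
  have hx₀mem : x₀ ∈ interior (φ ⁻¹' {0}) := by
    rw [mem_interior_iff_mem_nhds]
    filter_upwards [e1, e2, e3] with x ⟨τ₁, hu, hxu⟩ ⟨τ₂, hu', hxu'⟩ ⟨τ₃, hu'', hxu''⟩
    have hφz : φ (y + d + τ₃ • v) = 0 :=
      hu'' (r + τ₃) (by rw [hz, add_smul, add_assoc])
    have hφx : mq n (φ x) = 0 := by
      have := hpres _ _ hxu''
      rwa [hφz, sub_zero] at this
    have hn1 := hnull _ (hsm y τ₁ hy)
    have hn2 := hnull _ (hsm y' τ₂ hy')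
    exact eq_zero_of_orthogonal_pair hn hn1 hφx (hPP hu hu')
      (mB_eq_zero_of_coherent hφx hn1 (hpres _ _ hxu))
      (mB_eq_zero_of_coherent hφx hn2 (hpres _ _ hxu'))
  rw [hgen] at hx₀mem
  exact hx₀mem

/-- `core` applied along the null line `a + ℝ y₁`, in one of two ways: the image of that line is
orthogonal to `φ y₁` or it is not. -/
lemma false_of_general_position (hn : 4 ≤ n) (hcont : Continuous φ)
    (hpres : ∀ a b : Fin n → ℝ, mq n (b - a) = 0 → mq n (φ b - φ a) = 0)
    (h0 : φ 0 = 0) (hgen : interior (φ ⁻¹' {0}) = ∅)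
    {a y₁ y₂ : Fin n → ℝ} (ha : mq n a = 0) (hφa : φ a = 0)
    (h1 : mq n y₁ = 0) (h2 : mq n y₂ = 0) (h12 : mB n (φ y₁) (φ y₂) ≠ 0)
    {α β γ : ℝ} (hα : mB n a y₁ = α) (hβ : mB n a y₂ = β) (hγ : mB n y₁ y₂ = γ)
    (hα0 : α ≠ 0) (hβ0 : β ≠ 0) (g1 : α - γ ≠ 0) (g2 : α - β - γ ≠ 0) (g3 : α - β ≠ 0)
    (g4 : β * α - (α - γ) ^ 2 ≠ 0) : False := by
  have hnull : ∀ x, mq n x = 0 → mq n (φ x) = 0 := by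
    intro x hx
    have := hpres 0 x (by simpa using hx)
    simpa [h0] using this
  have hBa := ha
  have hB1 := h1
  have hB2 := h2
  rw [mq_eq] at hBa hB1 hB2
  have hcoh : ∀ s t : ℝ, mq n (a + s • y₁ - (a + t • y₁)) = 0 := by
    intro s t
    rw [add_sub_add_left_eq_sub, ← sub_smul, mq_eq, mB_smul_left, mB_smul_right, hB1]
    ring
  have hline : ∀ s : ℝ, mq n (φ (a + s • y₁)) = 0 := by
    intro s
    have := hpres _ _ (hcoh s 0)
    simpa [hφa] using this
  by_cases hcase : ∃ s : ℝ, mB n (φ (a + s • y₁)) (φ y₁) ≠ 0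
  · obtain ⟨s, hs⟩ := hcase
    refine core hn hcont hpres h0 hgen (a := a) (v := y₁) (y := y₁) (y' := y₂) (r := 1) hφa h1 h1 h2
      h12 (hline s) hs
      (fun t => mB_eq_zero_of_coherent (hline t) (hline s) (hpres _ _ (hcoh t s))) ?_ ?_ ?_ ?_ ?_
    all_goals
      simp only [one_smul, mq_eq, mB_sub_left, mB_sub_right, mB_add_left, mB_add_right,
        mB_comm y₁ a, mB_comm y₂ a, mB_comm y₂ y₁, hBa, hB1, hB2, hα, hβ, hγ]
    · ring
    · intro h; exact g2 (by linear_combination h / 2)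
    · intro h; exact g3 (by linear_combination h)
    · intro h; exact hα0 (by linear_combination h)
    · intro h; exact hα0 (by linear_combination h)
  · push Not at hcase
    obtain ⟨r, hr⟩ : ∃ r : ℝ, r = β / (α - γ) := ⟨_, rfl⟩
    have hr' : r * (α - γ) = β := by rw [hr]; field_simp
    refine core hn hcont hpres h0 hgen (a := a) (v := y₁) (y := y₂) (y' := y₁) (r := r) hφa h1 h2 h1
      (by rwa [mB_comm]) (hnull _ h1) h12 hcase ?_ ?_ ?_ ?_ ?_
    all_goals
      simp only [mq_eq, mB_sub_left, mB_sub_right, mB_add_left, mB_add_right, mB_smul_left,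
        mB_smul_right, mB_comm y₁ a, mB_comm y₂ a, mB_comm y₂ y₁, hBa, hB1, hB2, hα, hβ, hγ]
    · linear_combination 2 * hr'
    · intro h
      have h' : (r - 1) * α = 0 := by linear_combination h / 2
      have h'' : r - 1 = 0 := (mul_eq_zero.1 h').resolve_right hα0
      exact g2 (by linear_combination hr' - (α - γ) * h'')
    · intro h
      exact g4 (by linear_combination (α - γ) * h - γ * hr')
    · intro h
      exact mul_ne_zero hβ0 hα0 (by linear_combination (α - γ) * h - γ * hr')
    · intro h; exact g1 (by linear_combination h)

/-- A null vector satisfying an open condition can be replaced by one that is moreover not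
proportional to the null vector `a`. -/
lemma exists_perturb (hn : 4 ≤ n) {a e y : Fin n → ℝ} (ha : mq n a = 0) (he : mq n e = 0)
    (hae : mB n a e ≠ 0) (hy : mq n y = 0) (hy0 : y ≠ 0) {P : (Fin n → ℝ) → Prop}
    (hP : ∀ᶠ u in nhds y, P u) : ∃ u, P u ∧ mq n u = 0 ∧ mB n a u ≠ 0 := by
  by_cases hay : mB n a y = 0
  swap
  · exact ⟨y, hP.self_of_nhds, hy, hay⟩
  have ha0 : a ≠ 0 := by
    rintro rfl
    exact hae (by simp [mB])
  obtain ⟨c, rfl⟩ := exists_smul_of_orthogonal hn ha hy hay ha0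
  have hc : c ≠ 0 := by
    rintro rfl
    exact hy0 (zero_smul _ _)
  -- a nonzero `u` orthogonal to the hyperbolic plane spanned by `a` and `e`
  obtain ⟨u, hu0, hua, hue⟩ : ∃ u : Fin n → ℝ, u ≠ 0 ∧ mB n u a = 0 ∧ mB n u e = 0 := by
    let L : (Fin n → ℝ) →ₗ[ℝ] (Fin 2 → ℝ) :=
      { toFun := fun u => ![mB n u a, mB n u e]
        map_add' := fun u u' => by ext i; fin_cases i <;> simp [mB_add_left]
        map_smul' := fun s u => by ext i; fin_cases i <;> simp [mB_smul_left] }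
    have hker : LinearMap.ker L ≠ ⊥ := LinearMap.ker_ne_bot_of_finrank_lt (by simp; omega)
    obtain ⟨u, hu, hu0⟩ := (Submodule.ne_bot_iff _).1 hker
    have hL : ![mB n u a, mB n u e] = 0 := hu
    exact ⟨u, hu0, by simpa using congrFun hL 0, by simpa using congrFun hL 1⟩
  have hqu : mB n u u ≠ 0 := fun h =>
    hu0 (eq_zero_of_orthogonal_pair hn ha (by rw [mq_eq, h]) hae hua hue)
  rw [mq_eq] at ha he
  -- `c a + ε u + κ ε² e` is a curve of null vectors through `c a`
  obtain ⟨κ, hκ⟩ : ∃ κ : ℝ, κ = -mB n u u / (2 * c * mB n a e) := ⟨_, rfl⟩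
  have hκ' : 2 * c * κ * mB n a e = -mB n u u := by rw [hκ]; field_simp
  have hκ0 : κ ≠ 0 := by
    rintro rfl
    exact hqu (by linear_combination hκ')
  have hcurve : Continuous fun ε : ℝ => c • a + ε • u + (κ * ε ^ 2) • e := by fun_prop
  have h1 : ∀ᶠ ε in nhds (0 : ℝ), P (c • a + ε • u + (κ * ε ^ 2) • e) :=
    hcurve.continuousAt.eventually (by simpa using hP)
  obtain ⟨ε, hε, hε0⟩ := ((h1.filter_mono nhdsWithin_le_nhds).and
    (self_mem_nhdsWithin : {(0 : ℝ)}ᶜ ∈ nhdsWithin 0 {0}ᶜ)).exists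
  refine ⟨_, hε, ?_, ?_⟩
  · simp only [mq_eq, mB_add_left, mB_add_right, mB_smul_left, mB_smul_right, mB_comm e a,
      mB_comm a u, mB_comm e u, ha, he, hua, hue]
    linear_combination ε ^ 2 * hκ'
  · simp only [mB_add_right, mB_smul_right, mB_comm a u, ha, hua]
    have : ε ≠ 0 := hε0
    simp [hκ0, hae, this]

end Preserver

theorem generic_nondegenerate_preserver_maps_punctured_cone_into_itself
    (n : ℕ) (hn : 4 ≤ n) (φ : (Fin n → ℝ) → (Fin n → ℝ))
    (hcont : Continuous φ)
    (hpres : ∀ a b : Fin n → ℝ, mq n (b - a) = 0 → mq n (φ b - φ a) = 0)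
    (hnd : ¬ ∃ s' : Fin n → ℝ, ∀ x : Fin n → ℝ, mq n (φ x - s') = 0)
    (h0 : φ 0 = 0)
    (hnc : ∃ ψ : (Fin n → ℝ) → (Fin n → ℝ), IsInducedMap n φ 0 ψ ∧
       ∃ p ∈ QSet n, ∃ p' ∈ QSet n, ψ p ≠ ψ p')
    (hgen : interior (φ ⁻¹' {0}) = ∅) :
    ∀ a : Fin n → ℝ, mq n a = 0 → a ≠ 0 → mq n (φ a) = 0 ∧ φ a ≠ 0 := by
  have hnull : ∀ x, mq n x = 0 → mq n (φ x) = 0 := by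
    intro x hx
    have := hpres 0 x (by simpa using hx)
    simpa [h0] using this
  intro a ha ha0
  refine ⟨hnull a ha, fun hφa => ?_⟩
  obtain ⟨ψ, hψ, p₁, hp₁, p₂, hp₂, hne⟩ := hnc
  let t : Fin n := ⟨n - 1, by omega⟩
  have hQ : ∀ p ∈ QSet n, mq n p = 0 := by
    intro p hp
    have h1 : mq n p = ∑ i : Fin n, ((if i = t then (1 : ℝ) else 0) -
        if (i : ℕ) = n - 1 then 0 else p i ^ 2) := by
      refine Finset.sum_congr rfl fun i _ => ?_
      have hi : i = t ↔ (i : ℕ) = n - 1 := Fin.ext_iff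
      by_cases h : (i : ℕ) = n - 1
      · simp [hi, h, hp.1 i h]
      · simp [hi, h]
    rw [h1, Finset.sum_sub_distrib, hp.2]
    simp
  have hQt : ∀ p ∈ QSet n, p t = 1 := fun p hp => hp.1 t rfl
  -- `φ` does not vanish on `ℝ p`, and its values there are multiples of `ψ p`
  have hval : ∀ p ∈ QSet n, ∃ s c : ℝ, c ≠ 0 ∧ φ (s • p) = c • ψ p := by
    intro p hp
    obtain ⟨s, hs⟩ := exists_ne_zero_on_line hcont hpres hnd (p := p) (e := Pi.single t 1)
      (hQ p hp) (by
        rw [mB, Finset.sum_eq_single t]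
        · simp [t, hQt p hp]
        · intro i _ hi
          simp [hi]
        · simp)
    obtain ⟨c, hc⟩ := (hψ p hp).2 s
    rw [zero_add, h0, zero_add] at hc
    refine ⟨s, c, ?_, hc⟩
    rintro rfl
    exact hs (by rw [hc, zero_smul])
  have hψψ : mB n (ψ p₁) (ψ p₂) ≠ 0 := by
    intro h
    have hm1 := (hψ p₁ hp₁).1
    have hm2 := (hψ p₂ hp₂).1
    have hψ0 : ψ p₁ ≠ 0 := by
      intro h
      have := hQt _ hm1
      simp [h] at this
    obtain ⟨c, hc⟩ := exists_smul_of_orthogonal hn (hQ _ hm1) (hQ _ hm2) h hψ0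
    have hc1 : c = 1 := by
      have := congrFun hc t
      simpa [hQt _ hm1, hQt _ hm2] using this.symm
    exact hne (by rw [hc, hc1, one_smul])
  obtain ⟨s₁, k₁, hk₁, hv₁⟩ := hval p₁ hp₁
  obtain ⟨s₂, k₂, hk₂, hv₂⟩ := hval p₂ hp₂
  have hsmul : ∀ (c : ℝ) (x : Fin n → ℝ), mq n x = 0 → mq n (c • x) = 0 := by
    intro c x hx
    rw [mq_eq] at *
    rw [mB_smul_left, mB_smul_right, hx, mul_zero, mul_zero]
  have hne0 : ∀ {x y : Fin n → ℝ}, mB n (φ x) (φ y) ≠ 0 → x ≠ 0 ∧ y ≠ 0 := by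
    intro x y h
    constructor <;> rintro rfl <;> exact h (by simp [h0, mB])
  have hφφ : mB n (φ (s₁ • p₁)) (φ (s₂ • p₂)) ≠ 0 := by
    rw [hv₁, hv₂, mB_smul_left, mB_smul_right]
    exact mul_ne_zero hk₁ (mul_ne_zero hk₂ hψψ)
  -- otherwise `s₁ p₁` and `s₂ p₂` would both be multiples of `a`, hence coherent
  obtain ⟨e, he, hae⟩ : ∃ e, mq n e = 0 ∧ mB n a e ≠ 0 := by
    by_contra! hall
    have q₁ := hall _ (hsmul s₁ p₁ (hQ p₁ hp₁))
    have q₂ := hall _ (hsmul s₂ p₂ (hQ p₂ hp₂))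
    obtain ⟨c₁, hc₁⟩ := exists_smul_of_orthogonal hn ha (hsmul s₁ p₁ (hQ p₁ hp₁)) q₁ ha0
    obtain ⟨c₂, hc₂⟩ := exists_smul_of_orthogonal hn ha (hsmul s₂ p₂ (hQ p₂ hp₂)) q₂ ha0
    refine hφφ (mB_eq_zero_of_coherent (hnull _ (hsmul _ _ (hQ _ hp₁)))
      (hnull _ (hsmul _ _ (hQ _ hp₂))) (hpres _ _ ?_))
    rw [hc₁, hc₂, ← sub_smul]
    exact hsmul _ _ ha
  obtain ⟨y₁, y₂, h1, h2, h12, hα0, hβ0⟩ : ∃ y₁ y₂, mq n y₁ = 0 ∧ mq n y₂ = 0 ∧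
      mB n (φ y₁) (φ y₂) ≠ 0 ∧ mB n a y₁ ≠ 0 ∧ mB n a y₂ ≠ 0 := by
    obtain ⟨y₁, g₁, h₁, h₁'⟩ := exists_perturb hn ha he hae (hsmul s₁ p₁ (hQ p₁ hp₁))
      (hne0 hφφ).1 ((continuous_mB hcont continuous_const).continuousAt.eventually_ne hφφ)
    obtain ⟨y₂, g₂, h₂, h₂'⟩ := exists_perturb hn ha he hae (hsmul s₂ p₂ (hQ p₂ hp₂))
      (hne0 g₁).2 ((continuous_mB continuous_const hcont).continuousAt.eventually_ne g₁)
    exact ⟨y₁, y₂, h₁, h₂, g₂, h₁', h₂'⟩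
  obtain ⟨α, hα⟩ : ∃ α, mB n a y₁ = α := ⟨_, rfl⟩
  obtain ⟨β, hβ⟩ : ∃ β, mB n a y₂ = β := ⟨_, rfl⟩
  obtain ⟨γ, hγ⟩ : ∃ γ, mB n y₁ y₂ = γ := ⟨_, rfl⟩
  rw [hα] at hα0
  rw [hβ] at hβ0
  -- replacing `y₂` by `μ y₂` with `μ` close to `1` avoids the zeros of this polynomial in `μ`,
  -- which is not the zero polynomial because it does not vanish at `0`
  let R : Polynomial ℝ := open Polynomial in
    X * ((C α - C γ * X) * (C α - C β * X - C γ * X) * (C α - C β * X) *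
      (C (β * α) * X - (C α - C γ * X) ^ 2))
  have hR : R ≠ 0 := by
    refine mul_ne_zero Polynomial.X_ne_zero fun h => ?_
    have := congrArg (Polynomial.eval 0) h
    simp [hα0] at this
  have hmu : ∀ᶠ μ in nhds (1 : ℝ), mB n (φ y₁) (φ (μ • y₂)) ≠ 0 := by
    have hc : Continuous fun μ : ℝ => mB n (φ y₁) (φ (μ • y₂)) :=
      continuous_mB continuous_const (by fun_prop)
    exact hc.continuousAt.eventually_ne (by simpa using h12)
  have hroot : ∀ᶠ μ in nhdsWithin (1 : ℝ) {1}ᶜ, R.eval μ ≠ 0 := by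
    have hfin : {μ : ℝ | R.IsRoot μ}.Finite := Polynomial.finite_setOfPred_isRoot hR
    have := (hfin.subset (Set.sdiff_subset (t := {1}))).isClosed.isOpen_compl.mem_nhds
      (x := (1 : ℝ)) (by simp)
    filter_upwards [nhdsWithin_le_nhds this, self_mem_nhdsWithin] with μ h1 h2 h3
    exact h1 ⟨h3, h2⟩
  obtain ⟨μ, hμ, hRμ⟩ := ((hmu.filter_mono nhdsWithin_le_nhds).and hroot).exists
  simp only [R, Polynomial.eval_mul, Polynomial.eval_sub, Polynomial.eval_pow, Polynomial.eval_C,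
    Polynomial.eval_X, ne_eq, mul_eq_zero, not_or] at hRμ
  obtain ⟨hμ0, ⟨⟨r1, r2⟩, r3⟩, r4⟩ := hRμ
  refine false_of_general_position hn hcont hpres h0 hgen ha hφa h1 (hsmul μ y₂ h2) hμ hα
    (β := β * μ) (γ := γ * μ) (by rw [mB_smul_right, hβ, mul_comm])
    (by rw [mB_smul_right, hγ, mul_comm]) hα0 (mul_ne_zero hβ0 hμ0) r1 r2 r3 ?_
  intro h
  exact r4 (by linear_combination h)
end
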